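/- arXiv:1606.00716 — 11 statements merged into one kernel-verified Lean document; each statement's English description precedes it below -/
import Mathlib

section
/- Let $(\gamma_n)_{n\ge1}$ be complex numbers with $0<|\gamma_n|\le1$ and define $B_{-1}=0$, $B_0=1$, and $B_n=(b_n/\gamma_n)B_{n-1}-a_nB_{n-2}$ for $n\ge1$. Then for every $n\ge1$ one has $|B_n|-|B_{n-1}|\ge a_n\,(|B_{n-1}|-|B_{n-2}|)$; consequently $|B_n|-|B_{n-1}|\ge\rho_n$ for all $n\ge1$ and $|B_n|\ge v_+(n)$ for all $n\ge-1$. -/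
/-- Sleszynski–Pringsheim denominators: growth of moduli.
Context: `a n > 0` for `n ≥ 1`, `b n = 1 + a n`, `ρ 0 = 1`, `ρ n = a 1 ⋯ a n`,
`v (-1) = 0`, `v n = ∑_{k=0}^n ρ k`. -/
theorem stmt_0
    (a : ℤ → ℝ) (ha : ∀ n : ℤ, 1 ≤ n → 0 < a n)
    (ρ : ℤ → ℝ) (hρ0 : ρ 0 = 1)
    (hρ : ∀ n : ℤ, 1 ≤ n → ρ n = ρ (n - 1) * a n)
    (v : ℤ → ℝ) (hv : ∀ n : ℤ, v n = ∑ k ∈ Finset.Icc (0 : ℤ) n, ρ k)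
    (γ : ℤ → ℂ) (hγ : ∀ n : ℤ, 1 ≤ n → 0 < ‖γ n‖ ∧ ‖γ n‖ ≤ 1)
    (B : ℤ → ℂ) (hBm : B (-1) = 0) (hB0 : B 0 = 1)
    (hB : ∀ n : ℤ, 1 ≤ n →
      B n = (((1 + a n : ℝ) : ℂ) / γ n) * B (n - 1) - ((a n : ℝ) : ℂ) * B (n - 2)) :
    (∀ n : ℤ, 1 ≤ n →
      a n * (‖B (n - 1)‖ - ‖B (n - 2)‖) ≤
        ‖B n‖ - ‖B (n - 1)‖) ∧
    (∀ n : ℤ, 1 ≤ n → ρ n ≤ ‖B n‖ - ‖B (n - 1)‖) ∧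
    (∀ n : ℤ, -1 ≤ n → v n ≤ ‖B n‖) := by
  have h1 : ∀ n : ℤ, 1 ≤ n →
      a n * (‖B (n - 1)‖ - ‖B (n - 2)‖) ≤ ‖B n‖ - ‖B (n - 1)‖ := by
    intro n hn
    have hapos := ha n hn
    obtain ⟨hg0, hg1⟩ := hγ n hn
    have hnorm : ‖(((1 + a n : ℝ) : ℂ) / γ n) * B (n - 1)‖
        = (1 + a n) / ‖γ n‖ * ‖B (n - 1)‖ := by
      rw [norm_mul, norm_div, Complex.norm_real, Real.norm_of_nonneg (by linarith)]
    have hnorm2 : ‖((a n : ℝ) : ℂ) * B (n - 2)‖ = a n * ‖B (n - 2)‖ := by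
      rw [norm_mul, Complex.norm_real, Real.norm_of_nonneg hapos.le]
    have htri := norm_sub_norm_le ((((1 + a n : ℝ) : ℂ) / γ n) * B (n - 1))
      (((a n : ℝ) : ℂ) * B (n - 2))
    rw [← hB n hn, hnorm, hnorm2] at htri
    have hdiv : 1 + a n ≤ (1 + a n) / ‖γ n‖ := by
      rw [le_div_iff₀ hg0]
      nlinarith
    have := mul_le_mul_of_nonneg_right hdiv (norm_nonneg (B (n - 1)))
    linarith
  have h2 : ∀ n : ℤ, 0 ≤ n → ρ n ≤ ‖B n‖ - ‖B (n - 1)‖ := by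
    intro n hn
    induction n, hn using Int.le_induction with
    | base => simp [hρ0, hB0, hBm]
    | succ m hm ih =>
      have h := h1 (m + 1) (by omega)
      have hr := hρ (m + 1) (by omega)
      have hp := ha (m + 1) (by omega)
      rw [show m + 1 - 2 = m - 1 by ring] at h
      rw [show m + 1 - 1 = m by ring] at h hr ⊢
      rw [hr]
      nlinarith
  refine ⟨h1, fun n hn => h2 n (by omega), ?_⟩
  intro n hn
  induction n, hn using Int.le_induction with
  | base => simp [hv, hBm]
  | succ m hm ih =>
    have h := h2 (m + 1) (by omega)
    rw [show m + 1 - 1 = m by ring] at h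
    have hs : Finset.Icc (0 : ℤ) (m + 1) = insert (m + 1) (Finset.Icc (0 : ℤ) m) := by
      ext k
      simp only [Finset.mem_Icc, Finset.mem_insert]
      omega
    rw [hv] at ih ⊢
    rw [hs, Finset.sum_insert (by simp)]
    linarith
end

section
/- Let $(\gamma_n)_{n\ge1}$ be real numbers with $0<\gamma_n\le1$ and define $B_{-1}=0$, $B_0=1$, $B_n=(b_n/\gamma_n)B_{n-1}-a_nB_{n-2}$ for $n\ge1$. Then $B_n>B_{n-1}$ for all $n\ge0$ (so the sequence is strictly increasing from $B_{-1}=0$). Moreover, if $\gamma_n=1$ for all $n$, then $B_n=v_+(n)$ for all $n\ge-1$, and the companion sequence defined by $A_0=0$, $A_1=a_1$ and $A_n=b_nA_{n-1}-a_nA_{n-2}$ for $n\ge2$ satisfies $A_n=v_+(n)-1$ for all $n\ge0$. -/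
/-- Real Sleszynski–Pringsheim denominators with `0 < γ n ≤ 1`: strict increase;
when `γ ≡ 1`, `B n = v n` and the companion `A` satisfies `A n = v n - 1`. -/
theorem stmt_1
    (a : ℤ → ℝ) (ha : ∀ n : ℤ, 1 ≤ n → 0 < a n)
    (ρ : ℤ → ℝ) (hρ0 : ρ 0 = 1)
    (hρ : ∀ n : ℤ, 1 ≤ n → ρ n = ρ (n - 1) * a n)
    (v : ℤ → ℝ) (hv : ∀ n : ℤ, v n = ∑ k ∈ Finset.Icc (0 : ℤ) n, ρ k)
    (γ : ℤ → ℝ) (hγ : ∀ n : ℤ, 1 ≤ n → 0 < γ n ∧ γ n ≤ 1)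
    (B : ℤ → ℝ) (hBm : B (-1) = 0) (hB0 : B 0 = 1)
    (hB : ∀ n : ℤ, 1 ≤ n →
      B n = ((1 + a n) / γ n) * B (n - 1) - a n * B (n - 2)) :
    (∀ n : ℤ, 0 ≤ n → B (n - 1) < B n) ∧
    ((∀ n : ℤ, 1 ≤ n → γ n = 1) →
      (∀ n : ℤ, -1 ≤ n → B n = v n) ∧
      (∀ A : ℤ → ℝ, A 0 = 0 → A 1 = a 1 →
        (∀ n : ℤ, 2 ≤ n → A n = (1 + a n) * A (n - 1) - a n * A (n - 2)) →
        ∀ n : ℤ, 0 ≤ n → A n = v n - 1)) := by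
  have hstep : ∀ n : ℤ, 0 ≤ n → v n = v (n - 1) + ρ n := by
    intro n hn
    have h : Finset.Icc (0 : ℤ) n = insert n (Finset.Icc (0 : ℤ) (n - 1)) := by
      ext k
      simp only [Finset.mem_insert, Finset.mem_Icc]
      omega
    rw [hv n, hv (n - 1), h, Finset.sum_insert (by simp), add_comm]
  have hvm : v (-1) = 0 := by rw [hv]; simp
  have hv0 : v 0 = 1 := by rw [hv]; simp [hρ0]
  have hvrec : ∀ n : ℤ, 1 ≤ n → v n = (1 + a n) * v (n - 1) - a n * v (n - 2) := by
    intro n hn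
    have h1 := hstep n (by omega)
    have h2 := hstep (n - 1) (by omega)
    rw [show n - 1 - 1 = n - 2 by ring] at h2
    have h3 := hρ n hn
    rw [h1, h3]
    linear_combination (-a n) * h2
  refine ⟨?_, ?_⟩
  · have key : ∀ n : ℤ, 0 ≤ n → 0 ≤ B (n - 1) ∧ B (n - 1) < B n := by
      intro n hn
      induction n, hn using Int.le_induction with
      | base => simp [hBm, hB0]
      | succ n hn ih =>
        obtain ⟨h0, h1⟩ := ih
        have hr := hB (n + 1) (by omega)
        rw [show n + 1 - 1 = n by ring, show n + 1 - 2 = n - 1 by ring] at hr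
        rw [show n + 1 - 1 = n by ring]
        have hpos := ha (n + 1) (by omega)
        obtain ⟨g0, g1⟩ := hγ (n + 1) (by omega)
        have hq : 1 + a (n + 1) ≤ (1 + a (n + 1)) / γ (n + 1) := by
          rw [le_div_iff₀ g0]
          nlinarith
        have hBn : 0 < B n := by linarith
        refine ⟨hBn.le, ?_⟩
        have e1 := mul_le_mul_of_nonneg_right hq hBn.le
        have e2 := mul_lt_mul_of_pos_left h1 hpos
        linarith
    exact fun n hn => (key n hn).2
  · intro hg
    refine ⟨?_, ?_⟩
    · have key : ∀ n : ℤ, 0 ≤ n → B (n - 1) = v (n - 1) ∧ B n = v n := by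
        intro n hn
        induction n, hn using Int.le_induction with
        | base => simp [hBm, hB0, hvm, hv0]
        | succ n hn ih =>
          have hr := hB (n + 1) (by omega)
          have hs := hvrec (n + 1) (by omega)
          rw [show n + 1 - 1 = n by ring, show n + 1 - 2 = n - 1 by ring] at hr hs
          rw [show n + 1 - 1 = n by ring]
          refine ⟨ih.2, ?_⟩
          rw [hr, hs, hg (n + 1) (by omega), ih.1, ih.2, div_one]
      intro n hn
      have h := (key (n + 1) (by omega)).1
      rwa [show n + 1 - 1 = n by ring] at h
    · intro A hA0 hA1 hA
      have key : ∀ n : ℤ, 0 ≤ n → A n = v n - 1 ∧ A (n + 1) = v (n + 1) - 1 := by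
        intro n hn
        induction n, hn using Int.le_induction with
        | base =>
          have h := hvrec 1 le_rfl
          norm_num [hvm, hv0] at h
          simp [hA0, hv0, hA1, h]
        | succ n hn ih =>
          have hr := hA (n + 1 + 1) (by omega)
          have hs := hvrec (n + 1 + 1) (by omega)
          rw [show n + 1 + 1 - 1 = n + 1 by ring, show n + 1 + 1 - 2 = n by ring] at hr hs
          refine ⟨ih.2, ?_⟩
          rw [hr, hs, ih.1, ih.2]
          ring
      exact fun n hn => (key n hn).1
end

section
/- Let $(\gamma_n)_{n\ge1}$ be complex numbers with $0<|\gamma_n|\le1$ and define $B_{-1}=0$, $B_0=1$, $B_n=(b_n/\gamma_n)B_{n-1}-a_nB_{n-2}$ for $n\ge1$. Then the map $n\mapsto|B_n|/v_+(n)$ (for $n\ge0$) is non-decreasing, i.e. $v_+(n)\,|B_{n+1}|\ge v_+(n+1)\,|B_n|$ for all $n\ge0$; and for every $n\ge1$, $\sum_{k>n}\rho_k/(|B_k|\,|B_{k-1}|)\le v_+(n)/|B_n|^2\le 1/|B_n|$. -/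
/-- Monotonicity of `n ↦ |B n| / v n` and the tail estimate
`∑_{k>n} ρ k / (|B k| |B (k-1)|) ≤ v n / |B n|^2 ≤ 1 / |B n|`. -/
theorem stmt_2
    (a : ℤ → ℝ) (ha : ∀ n : ℤ, 1 ≤ n → 0 < a n)
    (ρ : ℤ → ℝ) (hρ0 : ρ 0 = 1)
    (hρ : ∀ n : ℤ, 1 ≤ n → ρ n = ρ (n - 1) * a n)
    (v : ℤ → ℝ) (hv : ∀ n : ℤ, v n = ∑ k ∈ Finset.Icc (0 : ℤ) n, ρ k)
    (γ : ℤ → ℂ) (hγ : ∀ n : ℤ, 1 ≤ n → 0 < ‖γ n‖ ∧ ‖γ n‖ ≤ 1)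
    (B : ℤ → ℂ) (hBm : B (-1) = 0) (hB0 : B 0 = 1)
    (hB : ∀ n : ℤ, 1 ≤ n →
      B n = (((1 + a n : ℝ) : ℂ) / γ n) * B (n - 1) - ((a n : ℝ) : ℂ) * B (n - 2)) :
    (∀ n : ℤ, 0 ≤ n →
      v (n + 1) * ‖B n‖ ≤ v n * ‖B (n + 1)‖) ∧
    (∀ n : ℤ, 1 ≤ n →
      Summable (fun k : ℕ =>
        ρ (n + 1 + (k : ℤ)) /
          (‖B (n + 1 + (k : ℤ))‖ * ‖B (n + (k : ℤ))‖)) ∧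
      (∑' k : ℕ, ρ (n + 1 + (k : ℤ)) /
          (‖B (n + 1 + (k : ℤ))‖ * ‖B (n + (k : ℤ))‖)) ≤
        v n / (‖B n‖) ^ 2 ∧
      v n / (‖B n‖) ^ 2 ≤ 1 / ‖B n‖) := by
  have hρpos : ∀ m : ℕ, 0 < ρ (m : ℤ) := by
    intro m
    induction m with
    | zero => simp [hρ0]
    | succ m ih =>
      have h1 : (1 : ℤ) ≤ ((m + 1 : ℕ) : ℤ) := by omega
      rw [hρ _ h1]
      have h2 : ((m + 1 : ℕ) : ℤ) - 1 = (m : ℤ) := by omega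
      rw [h2]
      exact mul_pos ih (ha _ h1)
  have hvs : ∀ m : ℤ, 0 ≤ m → v m = v (m - 1) + ρ m := by
    intro m hm
    rw [hv, hv]
    have h : Finset.Icc (0 : ℤ) m = insert m (Finset.Icc (0 : ℤ) (m - 1)) := by
      ext x
      simp only [Finset.mem_Icc, Finset.mem_insert]
      omega
    rw [h, Finset.sum_insert (by simp), add_comm]
  have hvm : v (-1) = 0 := by rw [hv]; simp
  have hv0 : v 0 = 1 := by rw [hv]; simp [hρ0]
  have hvpos : ∀ m : ℕ, 0 < v (m : ℤ) := by
    intro m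
    induction m with
    | zero => simp [hv0]
    | succ m ih =>
      rw [hvs _ (by omega)]
      have h2 : ((m + 1 : ℕ) : ℤ) - 1 = (m : ℤ) := by omega
      rw [h2]
      exact add_pos ih (hρpos _)
  have step : ∀ m : ℕ, v m * ‖B (m - 1)‖ ≤ v (m - 1) * ‖B m‖ →
      v (m + 1) * ‖B m‖ ≤ v m * ‖B (m + 1)‖ := by
    intro m ih
    have hm1 : (1 : ℤ) ≤ (m : ℤ) + 1 := by omega
    have e1 : (m : ℤ) + 1 - 1 = m := by omega
    have e2 : (m : ℤ) + 1 - 2 = m - 1 := by omega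
    have hb := hB _ hm1
    rw [e1, e2] at hb
    have hpos := ha _ hm1
    obtain ⟨g0, g1⟩ := hγ _ hm1
    have hn : (1 + a (m + 1)) * ‖B m‖ - a (m + 1) * ‖B (m - 1)‖ ≤ ‖B (m + 1)‖ := by
      rw [hb]
      refine le_trans ?_ (norm_sub_norm_le _ _)
      rw [norm_mul, norm_mul, norm_div, Complex.norm_real, Complex.norm_real,
        Real.norm_of_nonneg hpos.le, Real.norm_of_nonneg (by linarith : 0 ≤ 1 + a (m + 1))]
      have : 1 + a (m + 1) ≤ (1 + a (m + 1)) / ‖γ (m + 1)‖ :=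
        le_div_self (by linarith) g0 g1
      have := mul_le_mul_of_nonneg_right this (norm_nonneg (B m))
      linarith
    have h1 := mul_le_mul_of_nonneg_left hn (hvpos m).le
    have h2 := mul_le_mul_of_nonneg_left ih hpos.le
    have h3 : v (m + 1) = (1 + a (m + 1)) * v m - a (m + 1) * v (m - 1) := by
      have r := hρ _ hm1
      have s1 := hvs (m + 1) (by omega)
      have s2 := hvs m (by omega)
      rw [e1] at r s1
      rw [s1, r]
      have : ρ m = v m - v (m - 1) := by linarith
      rw [this]; ring
    rw [h3]
    linarith
  have mono : ∀ m : ℕ, v (m + 1) * ‖B m‖ ≤ v m * ‖B (m + 1)‖ := by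
    intro m
    induction m with
    | zero => exact step 0 (by simp [hBm, hvm])
    | succ m ih =>
      apply step
      have e : ((m + 1 : ℕ) : ℤ) - 1 = m := by omega
      rw [e]
      push_cast
      exact ih
  have hge : ∀ m : ℕ, v m ≤ ‖B m‖ := by
    intro m
    induction m with
    | zero => simp [hv0, hB0]
    | succ m ih =>
      have h1 := mono m
      have h0 := hvpos m
      have h2 := hvpos (m + 1)
      push_cast at h2 ⊢
      have h3 := mul_le_mul_of_nonneg_left ih h2.le
      refine le_of_mul_le_mul_left ?_ h0
      linarith
  have hBpos : ∀ m : ℕ, 0 < ‖B m‖ := fun m => (hvpos m).trans_le (hge m)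
  have tele : ∀ m : ℕ, ρ (m + 1) / (‖B (m + 1)‖ * ‖B m‖) ≤
      v m / ‖B m‖ ^ 2 - v (m + 1) / ‖B (m + 1)‖ ^ 2 := by
    intro m
    have h1 := mono m
    have hX := hBpos m
    have hY := hBpos (m + 1)
    push_cast at hY
    have s1 := hvs (m + 1) (by omega)
    rw [add_sub_cancel_right] at s1
    have hr : ρ (m + 1) = v (m + 1) - v m := by linarith
    rw [hr]
    generalize ‖B m‖ = X at *
    generalize ‖B (m + 1)‖ = Y at *
    have k1 : v (m + 1) / (Y * X) ≤ v m / X ^ 2 := by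
      rw [div_le_div_iff₀ (by positivity) (by positivity)]
      nlinarith
    have k2 : v (m + 1) / Y ^ 2 ≤ v m / (Y * X) := by
      rw [div_le_div_iff₀ (by positivity) (by positivity)]
      nlinarith
    rw [sub_div]
    linarith
  refine ⟨?_, ?_⟩
  · intro n hn
    lift n to ℕ using hn
    exact mono n
  · intro n hn
    lift n to ℕ using (by omega)
    have hnn : ∀ k : ℕ, 0 ≤ ρ ((n : ℤ) + 1 + (k : ℤ)) /
        (‖B ((n : ℤ) + 1 + (k : ℤ))‖ * ‖B ((n : ℤ) + (k : ℤ))‖) := by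
      intro k
      have := hρpos (n + 1 + k)
      push_cast at this
      positivity
    have hsum : ∀ N : ℕ, ∑ k ∈ Finset.range N, ρ ((n : ℤ) + 1 + (k : ℤ)) /
        (‖B ((n : ℤ) + 1 + (k : ℤ))‖ * ‖B ((n : ℤ) + (k : ℤ))‖) ≤
        v n / ‖B n‖ ^ 2 - v (n + N) / ‖B (n + N)‖ ^ 2 := by
      intro N
      induction N with
      | zero => simp
      | succ N ih =>
        rw [Finset.sum_range_succ]
        have t := tele (n + N)
        have e : (n : ℤ) + 1 + (N : ℤ) = n + N + 1 := by ring
        push_cast at t ⊢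
        rw [e, ← add_assoc]
        linarith
    have hsum' : ∀ N : ℕ, ∑ k ∈ Finset.range N, ρ ((n : ℤ) + 1 + (k : ℤ)) /
        (‖B ((n : ℤ) + 1 + (k : ℤ))‖ * ‖B ((n : ℤ) + (k : ℤ))‖) ≤ v n / ‖B n‖ ^ 2 := by
      intro N
      have h := hvpos (n + N)
      push_cast at h
      have : 0 ≤ v (n + N) / ‖B (n + N)‖ ^ 2 := by positivity
      linarith [hsum N]
    refine ⟨summable_of_sum_range_le hnn hsum', Real.tsum_le_of_sum_range_le hnn hsum', ?_⟩
    have hX := hBpos n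
    have := hge n
    rw [div_le_div_iff₀ (by positivity) hX]
    nlinarith
end

section
/- Assume $v_+(n)\to+\infty$ as $n\to\infty$. Let $(\gamma_n)_{n\ge1}$ be complex numbers with $0<|\gamma_n|\le1$, and define $B_{-1}=0$, $B_0=1$, $B_n=(b_n/\gamma_n)B_{n-1}-a_nB_{n-2}$ for $n\ge1$, and $A_0=0$, $A_1=a_1$, $A_n=(b_n/\gamma_n)A_{n-1}-a_nA_{n-2}$ for $n\ge2$. Then the series $L=\sum_{k\ge1}\rho_k/(B_kB_{k-1})$ converges absolutely with $\sum_{k\ge1}\rho_k/(|B_k|\,|B_{k-1}|)\le1$, the convergents $A_n/B_n$ converge to $L$ as $n\to\infty$, and moreover for any complex sequence $(\gamma'_n)$ with $|\gamma'_n|\le1$, setting $\tilde A_n=(b_n/\gamma_n-\gamma'_n)A_{n-1}-a_nA_{n-2}$ and $\tilde B_n=(b_n/\gamma_n-\gamma'_n)B_{n-1}-a_nB_{n-2}$, one has $|\tilde B_n|\ge\rho_n$ and $\tilde A_n/\tilde B_n\to L$ as $n\to\infty$. -/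
open Filter

/-- Convergence of Sleszynski–Pringsheim continued fractions:
absolute convergence of the series `∑ ρ k / (B k B (k-1))` with sum of moduli `≤ 1`,
convergence of the convergents `A n / B n` to the sum `L`, and stability of the limit
under a bounded perturbation `γ'` of the last partial denominator. -/
theorem stmt_3
    (a : ℤ → ℝ) (ha : ∀ n : ℤ, 1 ≤ n → 0 < a n)
    (ρ : ℤ → ℝ) (hρ0 : ρ 0 = 1)
    (hρ : ∀ n : ℤ, 1 ≤ n → ρ n = ρ (n - 1) * a n)
    (v : ℤ → ℝ) (hv : ∀ n : ℤ, v n = ∑ k ∈ Finset.Icc (0 : ℤ) n, ρ k)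
    (hvlim : Tendsto (fun n : ℕ => v (n : ℤ)) atTop atTop)
    (γ : ℤ → ℂ) (hγ : ∀ n : ℤ, 1 ≤ n → 0 < ‖γ n‖ ∧ ‖γ n‖ ≤ 1)
    (B : ℤ → ℂ) (hBm : B (-1) = 0) (hB0 : B 0 = 1)
    (hB : ∀ n : ℤ, 1 ≤ n →
      B n = (((1 + a n : ℝ) : ℂ) / γ n) * B (n - 1) - ((a n : ℝ) : ℂ) * B (n - 2))
    (A : ℤ → ℂ) (hA0 : A 0 = 0) (hA1 : A 1 = ((a 1 : ℝ) : ℂ))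
    (hA : ∀ n : ℤ, 2 ≤ n →
      A n = (((1 + a n : ℝ) : ℂ) / γ n) * A (n - 1) - ((a n : ℝ) : ℂ) * A (n - 2))
    (γ' : ℤ → ℂ) (hγ' : ∀ n : ℤ, 1 ≤ n → ‖γ' n‖ ≤ 1)
    (tA : ℤ → ℂ)
    (htA : ∀ n : ℤ, 2 ≤ n →
      tA n = ((((1 + a n : ℝ) : ℂ) / γ n - γ' n)) * A (n - 1) - ((a n : ℝ) : ℂ) * A (n - 2))
    (tB : ℤ → ℂ)
    (htB : ∀ n : ℤ, 1 ≤ n →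
      tB n = ((((1 + a n : ℝ) : ℂ) / γ n - γ' n)) * B (n - 1) - ((a n : ℝ) : ℂ) * B (n - 2)) :
    ∃ L : ℂ,
      L = (∑' k : ℕ, ((ρ ((k : ℤ) + 1) : ℝ) : ℂ) / (B ((k : ℤ) + 1) * B (k : ℤ))) ∧
      Summable (fun k : ℕ =>
        ρ ((k : ℤ) + 1) / (‖B ((k : ℤ) + 1)‖ * ‖B (k : ℤ)‖)) ∧
      (∑' k : ℕ, ρ ((k : ℤ) + 1) /
          (‖B ((k : ℤ) + 1)‖ * ‖B (k : ℤ)‖)) ≤ 1 ∧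
      Tendsto (fun n : ℕ => A (n : ℤ) / B (n : ℤ)) atTop (nhds L) ∧
      (∀ n : ℤ, 1 ≤ n → ρ n ≤ ‖tB n‖) ∧
      Tendsto (fun n : ℕ => tA ((n : ℤ) + 2) / tB ((n : ℤ) + 2)) atTop (nhds L) := by
  -- the sequence `ρ` is positive
  have hρpos : ∀ n : ℕ, 0 < ρ (n : ℤ) := by
    intro n
    induction n with
    | zero => simp [hρ0]
    | succ k ih =>
      have h := hρ ((k : ℤ) + 1) (by omega)
      rw [add_sub_cancel_right] at h
      push_cast
      rw [h]
      exact mul_pos ih (ha _ (by omega))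
  -- basic growth step
  have hstep : ∀ n : ℤ, 1 ≤ n →
      a n * (‖B (n - 1)‖ - ‖B (n - 2)‖) ≤ ‖B n‖ - ‖B (n - 1)‖ := by
    intro n hn
    have han := ha n hn
    obtain ⟨hg0, hg1⟩ := hγ n hn
    have h1 : ‖(((1 + a n : ℝ) : ℂ) / γ n) * B (n - 1)‖ - ‖((a n : ℝ) : ℂ) * B (n - 2)‖
        ≤ ‖B n‖ := by
      rw [hB n hn]
      exact norm_sub_norm_le _ _
    rw [norm_mul, norm_mul, norm_div, Complex.norm_real, Complex.norm_real,
      Real.norm_of_nonneg (by linarith), Real.norm_of_nonneg han.le] at h1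
    have h2 : (1 + a n) ≤ (1 + a n) / ‖γ n‖ := by
      rw [le_div_iff₀ hg0]
      nlinarith
    have h3 := mul_le_mul_of_nonneg_right h2 (norm_nonneg (B (n - 1)))
    nlinarith
  have hdiff : ∀ n : ℕ, ρ (n : ℤ) ≤ ‖B (n : ℤ)‖ - ‖B ((n : ℤ) - 1)‖ := by
    intro n
    induction n with
    | zero => simp [hρ0, hBm, hB0]
    | succ k ih =>
      have h := hρ ((k : ℤ) + 1) (by omega)
      have h2 := hstep ((k : ℤ) + 1) (by omega)
      have h3 := ha ((k : ℤ) + 1) (by omega)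
      rw [show (k : ℤ) + 1 - 2 = (k : ℤ) - 1 by ring, add_sub_cancel_right] at h2
      rw [add_sub_cancel_right] at h
      push_cast
      rw [add_sub_cancel_right, h]
      nlinarith
  have hdiff' : ∀ n : ℕ, ρ ((n : ℤ) + 1) ≤ ‖B ((n : ℤ) + 1)‖ - ‖B (n : ℤ)‖ := by
    intro n
    have h := hdiff (n + 1)
    push_cast at h
    rwa [add_sub_cancel_right] at h
  have hvB : ∀ n : ℕ, v (n : ℤ) ≤ ‖B (n : ℤ)‖ := by
    intro n
    induction n with
    | zero => simp [hv, hρ0, hB0]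
    | succ k ih =>
      have h1 : v ((k : ℤ) + 1) = v (k : ℤ) + ρ ((k : ℤ) + 1) := by
        rw [hv, hv]
        have : Finset.Icc (0 : ℤ) ((k : ℤ) + 1) = insert ((k : ℤ) + 1) (Finset.Icc (0 : ℤ) k) := by
          ext x
          simp only [Finset.mem_Icc, Finset.mem_insert]
          omega
        rw [this, Finset.sum_insert (by simp), add_comm]
      have := hdiff' k
      push_cast
      linarith
  have hBpos : ∀ n : ℕ, 0 < ‖B (n : ℤ)‖ := by
    intro n
    have := hdiff n
    have := hρpos n
    have := norm_nonneg (B ((n : ℤ) - 1))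
    linarith
  have hBne : ∀ n : ℕ, B (n : ℤ) ≠ 0 := fun n => norm_pos_iff.mp (hBpos n)
  have hBpos' : ∀ n : ℕ, 0 < ‖B ((n : ℤ) + 1)‖ := fun n => by
    have := hBpos (n + 1)
    push_cast at this
    exact this
  have hBne' : ∀ n : ℕ, B ((n : ℤ) + 1) ≠ 0 := fun n => norm_pos_iff.mp (hBpos' n)
  have hρpos' : ∀ n : ℕ, 0 < ρ ((n : ℤ) + 1) := fun n => by
    have := hρpos (n + 1)
    push_cast at this
    exact this
  have hBlim : Tendsto (fun n : ℕ => ‖B (n : ℤ)‖) atTop atTop :=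
    tendsto_atTop_mono hvB hvlim
  -- Casoratian
  have hcas : ∀ n : ℕ, A ((n : ℤ) + 1) * B (n : ℤ) - A (n : ℤ) * B ((n : ℤ) + 1)
      = ((ρ ((n : ℤ) + 1) : ℝ) : ℂ) := by
    intro n
    induction n with
    | zero =>
      have := hρ 1 le_rfl
      norm_num at this
      simp [hA0, hA1, hB0, this, hρ0]
    | succ k ih =>
      have h1 := hA ((k : ℤ) + 1 + 1) (by omega)
      have h2 := hB ((k : ℤ) + 1 + 1) (by omega)
      have h3 := hρ ((k : ℤ) + 1 + 1) (by omega)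
      rw [show (k : ℤ) + 1 + 1 - 2 = (k : ℤ) by ring, add_sub_cancel_right] at h1 h2
      rw [add_sub_cancel_right] at h3
      push_cast
      rw [h1, h2, h3]
      push_cast
      rw [← ih]
      ring
  -- partial sums
  have hpart : ∀ n : ℕ, ∑ k ∈ Finset.range n,
      ((ρ ((k : ℤ) + 1) : ℝ) : ℂ) / (B ((k : ℤ) + 1) * B (k : ℤ)) = A (n : ℤ) / B (n : ℤ) := by
    intro n
    induction n with
    | zero => simp [hA0]
    | succ k ih =>
      rw [Finset.sum_range_succ, ih, ← hcas k]
      push_cast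
      have := hBne k
      have := hBne' k
      field_simp
      ring
  have hnn : ∀ k : ℕ, 0 ≤ ρ ((k : ℤ) + 1) / (‖B ((k : ℤ) + 1)‖ * ‖B (k : ℤ)‖) := fun k =>
    div_nonneg (hρpos' k).le (by positivity)
  have hpartR : ∀ n : ℕ, ∑ k ∈ Finset.range n,
      ρ ((k : ℤ) + 1) / (‖B ((k : ℤ) + 1)‖ * ‖B (k : ℤ)‖) ≤ 1 - 1 / ‖B (n : ℤ)‖ := by
    intro n
    induction n with
    | zero => simp [hB0]
    | succ k ih =>
      rw [Finset.sum_range_succ]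
      have h1 := hBpos k
      have h2 := hBpos' k
      have h3 : ρ ((k : ℤ) + 1) / (‖B ((k : ℤ) + 1)‖ * ‖B (k : ℤ)‖)
          ≤ 1 / ‖B (k : ℤ)‖ - 1 / ‖B ((k : ℤ) + 1)‖ := by
        rw [div_sub_div _ _ h1.ne' h2.ne', mul_comm ‖B ((k : ℤ) + 1)‖]
        apply div_le_div_of_nonneg_right _ (by positivity)
        have := hdiff' k
        linarith
      push_cast
      linarith
  have hpartR1 : ∀ n : ℕ, ∑ k ∈ Finset.range n,
      ρ ((k : ℤ) + 1) / (‖B ((k : ℤ) + 1)‖ * ‖B (k : ℤ)‖) ≤ 1 := fun n => by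
    have h1 := hpartR n
    have h2 : 0 < 1 / ‖B (n : ℤ)‖ := one_div_pos.mpr (hBpos n)
    linarith
  have hsum : Summable (fun k : ℕ =>
        ρ ((k : ℤ) + 1) / (‖B ((k : ℤ) + 1)‖ * ‖B (k : ℤ)‖)) :=
    summable_of_sum_range_le hnn hpartR1
  have hsumC : Summable (fun k : ℕ =>
      ((ρ ((k : ℤ) + 1) : ℝ) : ℂ) / (B ((k : ℤ) + 1) * B (k : ℤ))) := by
    apply Summable.of_norm
    refine hsum.congr fun k => ?_
    rw [norm_div, norm_mul, Complex.norm_real, Real.norm_of_nonneg (hρpos' k).le]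
  have hlim : Tendsto (fun n : ℕ => A (n : ℤ) / B (n : ℤ)) atTop
      (nhds (∑' k : ℕ, ((ρ ((k : ℤ) + 1) : ℝ) : ℂ) / (B ((k : ℤ) + 1) * B (k : ℤ)))) :=
    hsumC.hasSum.tendsto_sum_nat.congr hpart
  have htBn : ∀ n : ℤ, 1 ≤ n → ρ n ≤ ‖tB n‖ := by
    intro n hn
    have h1 : tB n = B n - γ' n * B (n - 1) := by
      rw [htB n hn, hB n hn]
      ring
    have h2 := norm_sub_norm_le (B n) (γ' n * B (n - 1))
    rw [norm_mul] at h2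
    have h3 := mul_le_mul_of_nonneg_right (hγ' n hn) (norm_nonneg (B (n - 1)))
    lift n to ℕ using (by omega)
    have h4 := hdiff n
    rw [h1]
    linarith
  refine ⟨_, rfl, hsum, Real.tsum_le_of_sum_range_le hnn hpartR1, hlim, htBn, ?_⟩
  have hlim1 := hlim.comp (tendsto_add_atTop_nat 1)
  have hBlim1 := (hBlim.comp (tendsto_add_atTop_nat 1)).inv_tendsto_atTop
  have hzero : Tendsto (fun n : ℕ => tA ((n : ℤ) + 2) / tB ((n : ℤ) + 2)
      - A ((n + 1 : ℕ) : ℤ) / B ((n + 1 : ℕ) : ℤ)) atTop (nhds 0) := by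
    refine squeeze_zero_norm (fun n => ?_) hBlim1
    have e1 := htA ((n : ℤ) + 2) (by omega)
    have e2 := htB ((n : ℤ) + 2) (by omega)
    have e3 := hρ ((n : ℤ) + 2) (by omega)
    have hp : 0 < ρ ((n : ℤ) + 2) := by
      have := hρpos (n + 2)
      push_cast at this
      exact this
    have hle := htBn ((n : ℤ) + 2) (by omega)
    have htpos : 0 < ‖tB ((n : ℤ) + 2)‖ := lt_of_lt_of_le hp hle
    have htne : tB ((n : ℤ) + 2) ≠ 0 := norm_pos_iff.mp htpos
    rw [show (n : ℤ) + 2 - 1 = (n : ℤ) + 1 by ring, show (n : ℤ) + 2 - 2 = (n : ℤ) by ring] at e1 e2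
    rw [show (n : ℤ) + 2 - 1 = (n : ℤ) + 1 by ring] at e3
    have hc : tA ((n : ℤ) + 2) * B ((n : ℤ) + 1) - tB ((n : ℤ) + 2) * A ((n : ℤ) + 1)
        = ((ρ ((n : ℤ) + 2) : ℝ) : ℂ) := by
      rw [e1, e2, e3]
      push_cast
      rw [← hcas n]
      ring
    have hb := hBpos' n
    simp only [Pi.inv_apply, Function.comp_apply]
    push_cast
    rw [div_sub_div _ _ htne (hBne' n), hc, norm_div, norm_mul, Complex.norm_real,
      Real.norm_of_nonneg hp.le, div_le_iff₀ (by positivity)]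
    field_simp
    exact hle
  have := hzero.add hlim1
  simpa using this
end

section
/- Let $n\ge2$ and $0\le s\le1$. Define $B_{-1}=0$, $B_0=1$, $B_k=b_kB_{k-1}-a_kB_{k-2}$ for $1\le k\le n-1$ (so $B_k=v_+(k)$), and $A_{-1}=1$, $A_0=0$, $A_1=a_1$, $A_k=b_kA_{k-1}-a_kA_{k-2}$ for $2\le k\le n-1$ (so $A_k=v_+(k)-1$). Set $\tilde B_n=(b_n-s)B_{n-1}-a_nB_{n-2}$ and $\tilde A_n=(b_n-s)A_{n-1}-a_nA_{n-2}$. Then $\tilde B_n\ge\rho_n$, $\tilde B_n\ge(1-s)\,v_+(n-1)$, and the value of the finite continued fraction $[(a_1,b_1);(-a_2,b_2);\dots;(-a_n,b_n-s)]$ satisfies $\frac{\tilde A_n}{\tilde B_n}=\frac{v_+(n-1)-1}{v_+(n-1)}+\frac{\rho_n}{v_+(n-1)\,\tilde B_n}$. -/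
/-- The perturbed convergent `[(a₁,b₁);(-a₂,b₂);…;(-aₙ,bₙ-s)]`:
lower bounds on the perturbed denominator and the exact value of the fraction. -/
theorem stmt_6
    (a : ℕ → ℝ) (ha : ∀ k : ℕ, 1 ≤ k → 0 < a k)
    (ρ : ℕ → ℝ) (hρ0 : ρ 0 = 1)
    (hρ : ∀ k : ℕ, 1 ≤ k → ρ k = ρ (k - 1) * a k)
    (v : ℕ → ℝ) (hv : ∀ k : ℕ, v k = ∑ j ∈ Finset.range (k + 1), ρ j)
    (n : ℕ) (hn : 2 ≤ n) (s : ℝ) (hs0 : 0 ≤ s) (hs1 : s ≤ 1)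
    (B : ℤ → ℝ) (hBm : B (-1) = 0) (hB0 : B 0 = 1)
    (hB : ∀ k : ℕ, 1 ≤ k → k ≤ n - 1 →
      B (k : ℤ) = (1 + a k) * B ((k : ℤ) - 1) - a k * B ((k : ℤ) - 2))
    (A : ℤ → ℝ) (hAm : A (-1) = 1) (hA0 : A 0 = 0) (hA1 : A 1 = a 1)
    (hA : ∀ k : ℕ, 2 ≤ k → k ≤ n - 1 →
      A (k : ℤ) = (1 + a k) * A ((k : ℤ) - 1) - a k * A ((k : ℤ) - 2)) :
    ρ n ≤ (1 + a n - s) * B ((n : ℤ) - 1) - a n * B ((n : ℤ) - 2) ∧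
    (1 - s) * v (n - 1) ≤ (1 + a n - s) * B ((n : ℤ) - 1) - a n * B ((n : ℤ) - 2) ∧
    ((1 + a n - s) * A ((n : ℤ) - 1) - a n * A ((n : ℤ) - 2)) /
        ((1 + a n - s) * B ((n : ℤ) - 1) - a n * B ((n : ℤ) - 2)) =
      (v (n - 1) - 1) / v (n - 1) +
        ρ n / (v (n - 1) * ((1 + a n - s) * B ((n : ℤ) - 1) - a n * B ((n : ℤ) - 2))) := by
  obtain ⟨m, rfl⟩ : ∃ m, n = m + 2 := ⟨n - 2, by omega⟩
  have hρs : ∀ k : ℕ, ρ (k + 1) = ρ k * a (k + 1) := fun k => by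
    simpa using hρ (k + 1) (by omega)
  have hpos : ∀ k : ℕ, 0 < ρ k := by
    intro k
    induction k with
    | zero => rw [hρ0]; norm_num
    | succ k ih => rw [hρs]; exact mul_pos ih (ha _ (by omega))
  have hvs : ∀ k : ℕ, v (k + 1) = v k + ρ (k + 1) := fun k => by
    rw [hv, hv, Finset.sum_range_succ]
  have hv0 : v 0 = 1 := by rw [hv]; simp [hρ0]
  have hvpos : ∀ k : ℕ, 0 < v k := by
    intro k
    rw [hv]
    exact Finset.sum_pos (fun j _ => hpos j) ⟨0, by simp⟩
  have key : ∀ k : ℕ, k ≤ m → B (k : ℤ) = v k ∧ B ((k : ℤ) + 1) = v (k + 1) ∧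
      A (k : ℤ) = v k - 1 ∧ A ((k : ℤ) + 1) = v (k + 1) - 1 := by
    intro k
    induction k with
    | zero =>
      intro _
      have h1 := hB 1 le_rfl (by omega)
      have h2 := hρs 0
      have h3 := hvs 0
      norm_num [hBm, hB0] at h1 h2 h3
      norm_num [hB0, hA0, hA1, hv0, h1, h2, h3, hρ0]
    | succ k ih =>
      intro hk
      obtain ⟨i1, i2, i3, i4⟩ := ih (by omega)
      have e1 : (((k + 2 : ℕ) : ℤ)) - 1 = (k : ℤ) + 1 := by push_cast; ring
      have e2 : (((k + 2 : ℕ) : ℤ)) - 2 = (k : ℤ) := by push_cast; ring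
      have e3 : (((k + 1 : ℕ) : ℤ)) + 1 = ((k + 2 : ℕ) : ℤ) := by push_cast; ring
      have h1 := hB (k + 2) (by omega) (by omega)
      have h2 := hA (k + 2) (by omega) (by omega)
      rw [e1, e2, i1, i2] at h1
      rw [e1, e2, i3, i4] at h2
      have h3 := hvs k
      have h4 := hvs (k + 1)
      have h5 := hρs (k + 1)
      rw [show k + 1 + 1 = k + 2 from rfl] at *
      rw [e3]
      push_cast at *
      refine ⟨i2, ?_, i4, ?_⟩
      · rw [h1, h4, h5, h3]; ring
      · rw [h2, h4, h5, h3]; ring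
  obtain ⟨i1, i2, i3, i4⟩ := key m le_rfl
  have e1 : (((m + 2 : ℕ) : ℤ)) - 1 = (m : ℤ) + 1 := by push_cast; ring
  have e2 : (((m + 2 : ℕ) : ℤ)) - 2 = (m : ℤ) := by push_cast; ring
  rw [e1, e2, i1, i2, i3, i4, show m + 2 - 1 = m + 1 from rfl]
  have h3 := hvs m
  have h5 : ρ (m + 2) = ρ (m + 1) * a (m + 2) := hρs (m + 1)
  have hD : (1 + a (m + 2) - s) * v (m + 1) - a (m + 2) * v m
      = (1 - s) * v (m + 1) + ρ (m + 2) := by rw [h5, h3]; ring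
  have hN : (1 + a (m + 2) - s) * (v (m + 1) - 1) - a (m + 2) * (v m - 1)
      = (1 - s) * v (m + 1) + ρ (m + 2) - (1 - s) := by rw [← hD]; ring
  rw [hD, hN]
  have hV := hvpos (m + 1)
  have hR := hpos (m + 2)
  have hnn : 0 ≤ (1 - s) * v (m + 1) := mul_nonneg (by linarith) hV.le
  refine ⟨by linarith, by linarith, ?_⟩
  have hDpos : 0 < (1 - s) * v (m + 1) + ρ (m + 2) := by linarith
  have hV' := hV.ne'
  have hD' := hDpos.ne'
  generalize v (m + 1) = V at *
  generalize ρ (m + 2) = R at *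
  rw [div_add_div _ _ hV' (mul_ne_zero hV' hD'),
    div_eq_div_iff hD' (mul_ne_zero hV' (mul_ne_zero hV' hD'))]
  ring
end

section
/- For all real $x\ge1$ and $K\ge1$ such that $\psi^{-1}(x)\ge1$, one has $\psi^{-1}(Kx)\le 2K^2\,\psi^{-1}(x)$ (as elements of $[0,+\infty]$). -/
open scoped ENNReal

/-- Generalized inverse (in `ℕ∞ = ℕ ∪ {+∞}`) of `f : ℕ → ℝ` at `x ∈ ℝ`:
`sup {n | f n ≤ x}`, with `sup ∅ = 0` and `sup ℕ = +∞`. -/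
noncomputable def invR (f : ℕ → ℝ) (x : ℝ) : ℕ∞ :=
  sSup ((fun m : ℕ => (m : ℕ∞)) '' {m : ℕ | f m ≤ x})

/-- Generalized inverse (in `ℕ∞`) of `f : ℕ → ℝ≥0∞` at `x ∈ ℝ≥0∞`. -/
noncomputable def invE (f : ℕ → ℝ≥0∞) (x : ℝ≥0∞) : ℕ∞ :=
  sSup ((fun m : ℕ => (m : ℕ∞)) '' {m : ℕ | f m ≤ x})

/-- Evaluation of `f : ℕ → ℝ` at an extended natural, with value `+∞` at `+∞`. -/
noncomputable def extF (f : ℕ → ℝ) : ℕ∞ → ℝ≥0∞ :=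
  fun n => if n = ⊤ then ⊤ else ENNReal.ofReal (f n.toNat)

theorem invR_mono_aux (f : ℕ → ℝ) {x y : ℝ} (h : x ≤ y) : invR f x ≤ invR f y := by
  unfold invR
  apply sSup_le_sSup
  apply Set.image_mono
  intro m hm
  exact le_trans hm h

theorem extF_mono_aux (f : ℕ → ℝ) (hf : Monotone f) : Monotone (extF f) := by
  intro m n h
  unfold extF
  by_cases hn : n = ⊤
  · simp [hn]
  · have hm : m ≠ ⊤ := fun e => hn (top_le_iff.mp (e ▸ h))
    simp only [hn, hm, if_false]
    exact ENNReal.ofReal_le_ofReal (hf (ENat.toNat_le_toNat h hn))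

theorem rho_pos_aux (a ρ : ℤ → ℝ) (ha : ∀ n, 0 < a n) (hρ0 : ρ 0 = 1)
    (hρp : ∀ n : ℤ, 1 ≤ n → ρ n = ρ (n - 1) * a n)
    (hρm : ∀ n : ℤ, n ≤ -1 → ρ n = ρ (n + 1) / a (n + 1)) (n : ℤ) : 0 < ρ n := by
  induction n using Int.induction_on with
  | zero => rw [hρ0]; exact one_pos
  | succ i ih =>
    rw [hρp _ (by omega)]
    simpa using mul_pos ih (ha _)
  | pred i ih =>
    rw [hρm _ (by omega)]
    have e : (-(i : ℤ) - 1 + 1) = -(i : ℤ) := by ring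
    rw [e]
    exact div_pos ih (ha _)

/-- Dominated variation for `ψ`, where
`ψ²(n) = n (wp(vp⁻¹(n)) + wm(vm⁻¹(n)))`: for `x, K ≥ 1` with `ψ⁻¹(x) ≥ 1`,
`ψ⁻¹(Kx) ≤ 2K² ψ⁻¹(x)` in `[0, +∞]`. -/
theorem stmt_7
    (δ : ℝ) (hδ : 0 < δ)
    (p q r : ℤ → ℝ)
    (hsum : ∀ n, p n + q n + r n = 1)
    (hmin : ∀ n, δ ≤ p n ∧ δ ≤ q n ∧ δ ≤ r n)
    (a : ℤ → ℝ) (ha : ∀ n, a n = q n / p n)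
    (ρ : ℤ → ℝ) (hρ0 : ρ 0 = 1)
    (hρp : ∀ n : ℤ, 1 ≤ n → ρ n = ρ (n - 1) * a n)
    (hρm : ∀ n : ℤ, n ≤ -1 → ρ n = ρ (n + 1) / a (n + 1))
    (vp vm wp wm : ℕ → ℝ)
    (hvp : ∀ n : ℕ, vp n = ∑ k ∈ Finset.Icc (0 : ℤ) (n : ℤ), ρ k)
    (hvm : ∀ n : ℕ, vm n = a 0 * ∑ k ∈ Finset.Icc (-(n : ℤ) - 1) (-1 : ℤ), ρ k)
    (hwp : ∀ n : ℕ, wp n = ∑ k ∈ Finset.Icc (0 : ℤ) (n : ℤ), 1 / ρ k)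
    (hwm : ∀ n : ℕ, wm n = (1 / a 0) * ∑ k ∈ Finset.Icc (-(n : ℤ) - 1) (-1 : ℤ), 1 / ρ k)
    (ψ : ℕ → ℝ≥0∞)
    (hψ : ∀ n : ℕ, (ψ n) ^ 2 =
      (n : ℝ≥0∞) * (extF wp (invR vp (n : ℝ)) + extF wm (invR vm (n : ℝ))))
    (x K : ℝ) (hx : 1 ≤ x) (hK : 1 ≤ K)
    (h1 : (1 : ℕ∞) ≤ invE ψ (ENNReal.ofReal x)) :
    (ENat.toENNReal (invE ψ (ENNReal.ofReal (K * x)))) ≤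
      ENNReal.ofReal (2 * K ^ 2) * ENat.toENNReal (invE ψ (ENNReal.ofReal x)) := by
  have hap : ∀ n, 0 < a n := fun n => by
    rw [ha]
    exact div_pos (lt_of_lt_of_le hδ (hmin n).2.1) (lt_of_lt_of_le hδ (hmin n).1)
  have hρ := rho_pos_aux a ρ hap hρ0 hρp hρm
  have hwpm : Monotone wp := by
    intro m n h
    rw [hwp, hwp]
    apply Finset.sum_le_sum_of_subset_of_nonneg
    · exact Finset.Icc_subset_Icc le_rfl (by exact_mod_cast h)
    · intro i _ _
      exact (one_div_pos.mpr (hρ i)).le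
  have hwmm : Monotone wm := by
    intro m n h
    rw [hwm, hwm]
    apply mul_le_mul_of_nonneg_left _ (one_div_pos.mpr (hap 0)).le
    apply Finset.sum_le_sum_of_subset_of_nonneg
    · exact Finset.Icc_subset_Icc (by omega) le_rfl
    · intro i _ _
      exact (one_div_pos.mpr (hρ i)).le
  obtain ⟨W, hW⟩ : ∃ W : ℕ → ℝ≥0∞, W = fun n : ℕ =>
    extF wp (invR vp (n : ℝ)) + extF wm (invR vm (n : ℝ)) := ⟨_, rfl⟩
  have hWm : Monotone W := by
    intro m n h
    have h' : (m : ℝ) ≤ n := by exact_mod_cast h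
    rw [hW]
    exact add_le_add (extF_mono_aux wp hwpm (invR_mono_aux vp h'))
      (extF_mono_aux wm hwmm (invR_mono_aux vm h'))
  have hψW : ∀ n : ℕ, ψ n ^ 2 = (n : ℝ≥0∞) * W n := fun n => by rw [hψ, hW]
  have hK2 : (1 : ℝ) ≤ K ^ 2 := one_le_pow₀ hK
  have hle : ∀ m : ℕ, ψ m ≤ ENNReal.ofReal x → (m : ℕ∞) ≤ invE ψ (ENNReal.ofReal x) :=
    fun m hm => le_sSup ⟨m, hm, rfl⟩
  generalize invE ψ (ENNReal.ofReal x) = N at *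
  induction N using ENat.recTopCoe with
  | top =>
    rw [ENat.toENNReal_top, ENNReal.mul_top]
    · exact le_top
    · simp only [ne_eq, ENNReal.ofReal_eq_zero, not_le]; linarith
  | coe N =>
    have hN : 1 ≤ N := by exact_mod_cast h1
    have hNr : (1 : ℝ) ≤ N := by exact_mod_cast hN
    have hlt : ENNReal.ofReal x < ψ (N + 1) := by
      by_contra hc
      have := hle (N + 1) (not_lt.mp hc)
      have h2 : N + 1 ≤ N := by exact_mod_cast this
      omega
    have key : ∀ m : ℕ, ψ m ≤ ENNReal.ofReal (K * x) → (m : ℝ) ≤ 2 * K ^ 2 * N := by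
      intro m hm
      by_cases hmN : m ≤ N
      · have : (m : ℝ) ≤ N := by exact_mod_cast hmN
        nlinarith
      · have h3 : N + 1 ≤ m := by omega
        have A : ENNReal.ofReal x ^ 2 ≤ ((N + 1 : ℕ) : ℝ≥0∞) * W (N + 1) := by
          rw [← hψW]; exact pow_le_pow_left' hlt.le 2
        have B : (m : ℝ≥0∞) * W m ≤ ENNReal.ofReal (K * x) ^ 2 := by
          rw [← hψW]; exact pow_le_pow_left' hm 2
        have C : (m : ℝ≥0∞) * ENNReal.ofReal x ^ 2 ≤
            ((N + 1 : ℕ) : ℝ≥0∞) * ENNReal.ofReal (K * x) ^ 2 := by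
          calc (m : ℝ≥0∞) * ENNReal.ofReal x ^ 2
              ≤ m * (((N + 1 : ℕ) : ℝ≥0∞) * W (N + 1)) := by gcongr
            _ ≤ m * (((N + 1 : ℕ) : ℝ≥0∞) * W m) := by gcongr; exact hWm h3
            _ = ((N + 1 : ℕ) : ℝ≥0∞) * (m * W m) := by ring
            _ ≤ _ := by gcongr
        have hx0 : 0 ≤ x := by linarith
        have hKx : 0 ≤ K * x := by positivity
        rw [← ENNReal.ofReal_pow hx0, ← ENNReal.ofReal_pow hKx, ← ENNReal.ofReal_natCast m,
          ← ENNReal.ofReal_natCast (N + 1), ← ENNReal.ofReal_mul (by positivity),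
          ← ENNReal.ofReal_mul (by positivity),
          ENNReal.ofReal_le_ofReal_iff (by positivity)] at C
        push_cast at C
        have hx2 : 0 < x ^ 2 := by positivity
        have D : (m : ℝ) ≤ (N + 1) * K ^ 2 := by
          apply le_of_mul_le_mul_right _ hx2
          linarith [C, mul_pow K x 2, show ((N : ℝ) + 1) * (K * x) ^ 2 = (N + 1) * K ^ 2 * x ^ 2 by ring]
        nlinarith
    have hfl : invE ψ (ENNReal.ofReal (K * x)) ≤ ((⌊2 * K ^ 2 * N⌋₊ : ℕ) : ℕ∞) := by
      apply sSup_le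
      rintro _ ⟨m, hm, rfl⟩
      exact Nat.cast_le.mpr (Nat.le_floor (key m hm))
    calc ENat.toENNReal (invE ψ (ENNReal.ofReal (K * x)))
        ≤ ENat.toENNReal ((⌊2 * K ^ 2 * N⌋₊ : ℕ) : ℕ∞) := ENat.toENNReal_le.mpr hfl
      _ = ENNReal.ofReal (⌊2 * K ^ 2 * N⌋₊ : ℕ) := by simp
      _ ≤ ENNReal.ofReal (2 * K ^ 2 * N) :=
        ENNReal.ofReal_le_ofReal (Nat.floor_le (by positivity))
      _ = _ := by rw [ENNReal.ofReal_mul (by positivity)]; simp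
end

section
/- There exists a constant $C(\delta)>0$ depending only on $\delta$ such that for every unit vector $u\in\mathbb R^d$ and all reals $x\ge1$, $K\ge1$: if $\varphi_{u,+}^{-1}(x)\ge1$ then $\varphi_{u,+}^{-1}(Kx)\le(2K^2/\delta)\,\varphi_{u,+}^{-1}(x)$, and if $\varphi_u^{-1}(x)\ge1$ then $\varphi_u^{-1}(Kx)\le(K^2/C(\delta))\,\varphi_u^{-1}(x)$ (as elements of $[0,+\infty]$). -/
open scoped ENNReal

/-! ### Helper lemmas -/

lemma aux_final (f : ℕ → ℝ≥0∞) (A : ℝ) (hA : 1 ≤ A)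
    (h : ∀ N n : ℕ, 1 ≤ N → N ≤ n → f n ≠ ⊤ → ∃ X Y : ℝ, 0 ≤ X ∧ 0 ≤ Y ∧
      f N ^ 2 = ENNReal.ofReal X ∧ f n ^ 2 = ENNReal.ofReal Y ∧ n * X ≤ A * N * Y)
    (x K : ℝ) (hx : 1 ≤ x) (hK : 1 ≤ K)
    (h1 : (1 : ℕ∞) ≤ invE f (ENNReal.ofReal x)) :
    ENat.toENNReal (invE f (ENNReal.ofReal (K * x))) ≤
      ENNReal.ofReal (2 * A * K ^ 2) * ENat.toENNReal (invE f (ENNReal.ofReal x)) := by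
  have hc : 1 ≤ 2 * A * K ^ 2 := by nlinarith [one_le_pow₀ (n := 2) hK]
  by_cases htop : invE f (ENNReal.ofReal x) = ⊤
  · rw [htop, ENat.toENNReal_top, ENNReal.mul_top]
    · exact le_top
    · simp only [ne_eq, ENNReal.ofReal_eq_zero, not_le]; linarith
  obtain ⟨N, hN⟩ := ENat.ne_top_iff_exists.mp htop
  rw [← hN] at h1 ⊢
  have hN1 : 1 ≤ N := by exact_mod_cast h1
  have hNR : (1 : ℝ) ≤ N := by exact_mod_cast hN1
  have hout : ENNReal.ofReal x < f (N + 1) := by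
    by_contra hcon
    have : ((N + 1 : ℕ) : ℕ∞) ≤ invE f (ENNReal.ofReal x) :=
      le_sSup ⟨N + 1, not_lt.mp hcon, rfl⟩
    rw [← hN] at this
    have : N + 1 ≤ N := by exact_mod_cast this
    omega
  have key : ∀ n : ℕ, f n ≤ ENNReal.ofReal (K * x) → (n : ℝ) ≤ 2 * A * K ^ 2 * N := by
    intro n hn
    by_cases hnN : n ≤ N
    · have : (n : ℝ) ≤ N := by exact_mod_cast hnN
      nlinarith
    obtain ⟨X, Y, hX, hY, eX, eY, hXY⟩ := h (N + 1) n (by omega) (by omega)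
      (ne_top_of_le_ne_top ENNReal.ofReal_ne_top hn)
    have hXx : x ^ 2 ≤ X := by
      have := pow_le_pow_left' hout.le 2
      rw [eX, ← ENNReal.ofReal_pow (by linarith)] at this
      exact (ENNReal.ofReal_le_ofReal_iff hX).mp this
    have hYx : Y ≤ (K * x) ^ 2 := by
      have := pow_le_pow_left' hn 2
      rw [eY, ← ENNReal.ofReal_pow (by nlinarith)] at this
      exact (ENNReal.ofReal_le_ofReal_iff (by positivity)).mp this
    push_cast at hXY
    have h2 : (n : ℝ) * x ^ 2 ≤ (A * (N + 1) * K ^ 2) * x ^ 2 := by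
      calc (n : ℝ) * x ^ 2 ≤ n * X := by gcongr
        _ ≤ _ := hXY
        _ ≤ A * (N + 1) * (K * x) ^ 2 := by gcongr
        _ = _ := by ring
    have h3 : (n : ℝ) ≤ A * (N + 1) * K ^ 2 := le_of_mul_le_mul_right h2 (by positivity)
    have h4 : A * K ^ 2 * (N + 1) ≤ A * K ^ 2 * (2 * N) := by gcongr; linarith
    linarith
  have hbd : invE f (ENNReal.ofReal (K * x)) ≤ ((⌊2 * A * K ^ 2 * N⌋₊ : ℕ) : ℕ∞) := by
    apply sSup_le
    rintro _ ⟨n, hn, rfl⟩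
    simp only [Nat.cast_le]
    exact Nat.le_floor (key n hn)
  calc ENat.toENNReal (invE f (ENNReal.ofReal (K * x)))
      ≤ ENat.toENNReal ((⌊2 * A * K ^ 2 * N⌋₊ : ℕ) : ℕ∞) := by gcongr
    _ = ENNReal.ofReal (⌊2 * A * K ^ 2 * N⌋₊ : ℝ) := by simp
    _ ≤ ENNReal.ofReal (2 * A * K ^ 2 * N) :=
        ENNReal.ofReal_le_ofReal (Nat.floor_le (by positivity))
    _ = _ := by rw [ENNReal.ofReal_mul (by linarith)]; simp

lemma aux_inv (v : ℕ → ℝ) (y : ℝ) (h0 : v 0 ≤ y) (h : invR v y ≠ ⊤) :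
    ∃ L : ℕ, invR v y = L ∧ v L ≤ y ∧ y < v (L + 1) := by
  have hmem : invR v y ∈ ((fun m : ℕ => (m : ℕ∞)) '' {m : ℕ | v m ≤ y}) :=
    haveI : Nonempty ((fun m : ℕ => (m : ℕ∞)) '' {m : ℕ | v m ≤ y}) := ⟨⟨_, ⟨0, h0, rfl⟩⟩⟩
    ENat.sSup_mem_of_nonempty_of_lt_top (lt_top_iff_ne_top.mpr h)
  obtain ⟨L, hL, e⟩ := hmem
  refine ⟨L, e.symm, hL, ?_⟩
  by_contra hcon
  have : ((L + 1 : ℕ) : ℕ∞) ≤ invR v y := le_sSup ⟨L + 1, not_lt.mp hcon, rfl⟩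
  rw [← e] at this
  have : L + 1 ≤ L := by
    simp only [Nat.cast_le] at this
    exact this
  omega

lemma aux_inv_mono (v : ℕ → ℝ) {y z : ℝ} (h : y ≤ z) : invR v y ≤ invR v z :=
  sSup_le_sSup (Set.image_mono fun _ hm => le_trans hm h)

/-- the finite index set of pairs -/
noncomputable def pairsF (A B : ℤ) : Finset (ℤ × ℤ) :=
  (Finset.Icc (A + 1) B ×ˢ Finset.Icc (A + 1) B).filter fun z => z.1 ≤ z.2

lemma mem_pairsF (A B : ℤ) (z : ℤ × ℤ) :
    z ∈ pairsF A B ↔ A + 1 ≤ z.1 ∧ z.1 ≤ z.2 ∧ z.2 ≤ B := by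
  simp only [pairsF, Finset.mem_filter, Finset.mem_product, Finset.mem_Icc]
  omega

lemma Icc_succ (A B : ℤ) (h : A ≤ B + 1) :
    Finset.Icc A (B + 1) = insert (B + 1) (Finset.Icc A B) := by
  ext x; simp only [Finset.mem_Icc, Finset.mem_insert]; omega

lemma sum_Icc_succ (A B : ℤ) (h : A ≤ B + 1) (f : ℤ → ℝ) :
    ∑ k ∈ Finset.Icc A (B + 1), f k = ∑ k ∈ Finset.Icc A B, f k + f (B + 1) := by
  rw [Icc_succ A B h, Finset.sum_insert (by simp), add_comm]

lemma pairs_sum (A B : ℤ) (T : ℤ → ℤ → ℝ) :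
    ∑ z ∈ pairsF A B, T z.1 z.2 =
      ∑ l ∈ Finset.Icc (A + 1) B, ∑ k ∈ Finset.Icc (A + 1) l, T k l := by
  apply Finset.sum_finset_product_right (pairsF A B) (Finset.Icc (A + 1) B)
    (fun l => Finset.Icc (A + 1) l)
  intro z
  rw [mem_pairsF]; simp only [Finset.mem_Icc]; omega

lemma sum_shift (A B : ℤ) (f : ℤ → ℝ) :
    ∑ k ∈ Finset.Icc (A + 1) (B + 1), f (k - 1) = ∑ k ∈ Finset.Icc A B, f k := by
  apply Finset.sum_bij' (fun k _ => k - 1) (fun k _ => k + 1)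
  all_goals (intro k; simp only [Finset.mem_Icc]; intros; first | omega | simp)

lemma variance_id (ρ G : ℤ → ℝ) (T : ℤ → ℤ → ℝ) (A B : ℤ) (hAB : A ≤ B)
    (hT : ∀ k l, A + 1 ≤ k → k ≤ l → T k l = ρ l * ρ (k - 1) * (G l - G (k - 1)) ^ 2) :
    ∑ z ∈ pairsF A B, T z.1 z.2 =
      (∑ k ∈ Finset.Icc A B, ρ k) * (∑ k ∈ Finset.Icc A B, ρ k * G k ^ 2)
        - (∑ k ∈ Finset.Icc A B, ρ k * G k) ^ 2 := by
  rw [pairs_sum]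
  induction B, hAB using Int.leInduction with
  | base => simp; ring
  | succ B hB ih =>
    rw [sum_Icc_succ (A + 1) B (by omega), ih, sum_Icc_succ A B (by omega),
      sum_Icc_succ A B (by omega), sum_Icc_succ A B (by omega)]
    have : ∑ k ∈ Finset.Icc (A + 1) (B + 1), T k (B + 1) =
        ∑ k ∈ Finset.Icc A B, ρ (B + 1) * ρ k * (G (B + 1) - G k) ^ 2 := by
      rw [← sum_shift A B]
      apply Finset.sum_congr rfl
      intro k hk
      rw [Finset.mem_Icc] at hk
      exact hT _ _ hk.1 hk.2
    rw [this]
    have e : ∑ k ∈ Finset.Icc A B, ρ (B + 1) * ρ k * (G (B + 1) - G k) ^ 2 =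
        ρ (B + 1) * (G (B + 1) ^ 2 * (∑ k ∈ Finset.Icc A B, ρ k)
          + (∑ k ∈ Finset.Icc A B, ρ k * G k ^ 2)
          - 2 * G (B + 1) * (∑ k ∈ Finset.Icc A B, ρ k * G k)) := by
      simp only [Finset.mul_sum, ← Finset.sum_add_distrib, ← Finset.sum_sub_distrib]
      apply Finset.sum_congr rfl
      intro k _; ring
    rw [e]; ring

lemma Q_id (ρ G : ℤ → ℝ) (I : Finset ℤ) (c : ℝ) :
    ∑ k ∈ I, ρ k * (G k - c) ^ 2 = (∑ k ∈ I, ρ k * G k ^ 2)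
      - 2 * c * (∑ k ∈ I, ρ k * G k) + c ^ 2 * ∑ k ∈ I, ρ k := by
  simp only [Finset.mul_sum, ← Finset.sum_add_distrib, ← Finset.sum_sub_distrib]
  apply Finset.sum_congr rfl
  intro k _; ring

lemma variance_mono (ρ G : ℤ → ℝ) (hρ : ∀ n, 0 < ρ n) (I J : Finset ℤ) (hIJ : I ⊆ J)
    (hJ : J.Nonempty) :
    ((∑ k ∈ I, ρ k) * (∑ k ∈ I, ρ k * G k ^ 2) - (∑ k ∈ I, ρ k * G k) ^ 2) * (∑ k ∈ J, ρ k)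
    ≤ ((∑ k ∈ J, ρ k) * (∑ k ∈ J, ρ k * G k ^ 2) - (∑ k ∈ J, ρ k * G k) ^ 2)
      * (∑ k ∈ I, ρ k) := by
  have hW : 0 < ∑ k ∈ J, ρ k := Finset.sum_pos (fun k _ => hρ k) hJ
  have hWI : 0 ≤ ∑ k ∈ I, ρ k := Finset.sum_nonneg (fun k _ => (hρ k).le)
  set c := (∑ k ∈ J, ρ k * G k) / (∑ k ∈ J, ρ k) with hc
  have hm : ∑ k ∈ I, ρ k * (G k - c) ^ 2 ≤ ∑ k ∈ J, ρ k * (G k - c) ^ 2 :=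
    Finset.sum_le_sum_of_subset_of_nonneg hIJ
      (fun k _ _ => mul_nonneg (hρ k).le (sq_nonneg _))
  rw [Q_id, Q_id] at hm
  have hcA : (∑ k ∈ J, ρ k * G k) = c * (∑ k ∈ J, ρ k) := by rw [hc]; field_simp
  rw [hcA] at hm ⊢
  generalize (∑ k ∈ J, ρ k) = W at *
  generalize (∑ k ∈ I, ρ k) = w at *
  generalize (∑ k ∈ J, ρ k * G k ^ 2) = S at *
  generalize (∑ k ∈ I, ρ k * G k ^ 2) = s at *
  generalize (∑ k ∈ I, ρ k * G k) = t at *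
  have h1 : w * s - t ^ 2 ≤ w * (s - 2 * c * t + c ^ 2 * w) := by nlinarith [sq_nonneg (t - c * w)]
  have h2 := mul_le_mul_of_nonneg_left hm hWI
  have h3 := mul_le_mul_of_nonneg_right (h1.trans h2) hW.le
  linarith

lemma T_mono (ρ h : ℤ → ℝ) (T : ℤ → ℤ → ℝ) (hρ : ∀ n, 0 < ρ n)
    (hT : ∀ k l, T k l = (∑ s ∈ Finset.Icc k l, h s * (ρ l / ρ s)) ^ 2 * (ρ (k - 1) / ρ l))
    (A B A' B' : ℤ) (hA : A' ≤ A) (hAB : A ≤ B) (hB : B ≤ B') :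
    (∑ z ∈ pairsF A B, T z.1 z.2) * (∑ k ∈ Finset.Icc A' B', ρ k) ≤
      (∑ z ∈ pairsF A' B', T z.1 z.2) * (∑ k ∈ Finset.Icc A B, ρ k) := by
  set G : ℤ → ℝ := fun j => ∑ s ∈ Finset.Icc (A' + 1) j, h s / ρ s with hG
  have hGs : ∀ k l, A' + 1 ≤ k → k ≤ l → ∑ s ∈ Finset.Icc k l, h s / ρ s = G l - G (k - 1) := by
    intro k l hk hl
    induction l, hl using Int.leInduction with
    | base =>
      have := sum_Icc_succ (A' + 1) (k - 1) (by omega) (fun s => h s / ρ s)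
      simp only [sub_add_cancel] at this
      simp [hG, this]
    | succ l hl ih =>
      rw [sum_Icc_succ k l (by omega), ih]
      simp only [hG]
      rw [sum_Icc_succ (A' + 1) l (by omega)]; ring
  have hT' : ∀ k l, A' + 1 ≤ k → k ≤ l → T k l = ρ l * ρ (k - 1) * (G l - G (k - 1)) ^ 2 := by
    intro k l hk hl
    rw [hT, ← hGs k l hk hl]
    have : ∑ s ∈ Finset.Icc k l, h s * (ρ l / ρ s) = ρ l * ∑ s ∈ Finset.Icc k l, h s / ρ s := by
      rw [Finset.mul_sum]; apply Finset.sum_congr rfl; intro s _; ring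
    rw [this]
    have := (hρ l).ne'
    field_simp
  rw [variance_id ρ G T A B hAB (fun k l hk hl => hT' k l (by omega) hl),
    variance_id ρ G T A' B' (by omega) hT']
  exact variance_mono ρ G hρ _ _ (Finset.Icc_subset_Icc hA hB) ⟨A', by simp; omega⟩

lemma tsum_pairs (P : ℤ × ℤ → Prop) (F : Finset (ℤ × ℤ)) (hPF : ∀ z, P z ↔ z ∈ F)
    (T : ℤ → ℤ → ℝ) (hT : ∀ k l, 0 ≤ T k l) :
    ∑' z : {z : ℤ × ℤ // P z}, ENNReal.ofReal (T (z : ℤ × ℤ).1 (z : ℤ × ℤ).2) =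
      ENNReal.ofReal (∑ z ∈ F, T z.1 z.2) := by
  obtain rfl : P = fun z => z ∈ F := funext fun z => propext (hPF z)
  rw [ENNReal.ofReal_sum_of_nonneg (fun _ _ => hT _ _)]
  exact Finset.tsum_subtype F (fun z => ENNReal.ofReal (T z.1 z.2))

/-- Dominated variation for `φ_{u,+}` and `φ_u`: there is `C(δ) > 0`, depending only on
`δ`, such that for every admissible model, every unit vector `u` and all `x, K ≥ 1`:
if `φ_{u,+}⁻¹(x) ≥ 1` then `φ_{u,+}⁻¹(Kx) ≤ (2K²/δ) φ_{u,+}⁻¹(x)`, and if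
`φ_u⁻¹(x) ≥ 1` then `φ_u⁻¹(Kx) ≤ (K²/C(δ)) φ_u⁻¹(x)` (in `[0,+∞]`). -/
theorem stmt_8
    (δ : ℝ) (hδ : 0 < δ) :
    ∃ C : ℝ, 0 < C ∧
      ∀ (d : ℕ), 1 ≤ d →
      ∀ (p q r : ℤ → ℝ),
        (∀ n, p n + q n + r n = 1) →
        (∀ n, δ ≤ p n ∧ δ ≤ q n ∧ δ ≤ r n) →
      ∀ (μ : ℤ → (Fin d → ℤ) → ℝ),
        (∀ n k, 0 ≤ μ n k) →
        (∀ n, HasSum (μ n) 1) →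
        (∀ n, ∃ M : ℝ, M ≤ 1 / δ ∧
          HasSum (fun k : Fin d → ℤ =>
            ‖(fun i => (k i : ℝ) : Fin d → ℝ)‖ ^ (max d 3) * μ n k) M) →
      ∀ (m : ℤ → EuclideanSpace ℝ (Fin d)),
        (∀ n i, HasSum (fun k : Fin d → ℤ => (k i : ℝ) * μ n k) (m n i)) →
      ∀ (η : ℤ → EuclideanSpace ℝ (Fin d)), (∀ n, η n = (r n / p n) • m n) →
      ∀ (a : ℤ → ℝ), (∀ n, a n = q n / p n) →
      ∀ (ρ : ℤ → ℝ), ρ 0 = 1 →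
        (∀ n : ℤ, 1 ≤ n → ρ n = ρ (n - 1) * a n) →
        (∀ n : ℤ, n ≤ -1 → ρ n = ρ (n + 1) / a (n + 1)) →
      ∀ (vp vm wp wm : ℕ → ℝ),
        (∀ n : ℕ, vp n = ∑ k ∈ Finset.Icc (0 : ℤ) (n : ℤ), ρ k) →
        (∀ n : ℕ, vm n = a 0 * ∑ k ∈ Finset.Icc (-(n : ℤ) - 1) (-1 : ℤ), ρ k) →
        (∀ n : ℕ, wp n = ∑ k ∈ Finset.Icc (0 : ℤ) (n : ℤ), 1 / ρ k) →
        (∀ n : ℕ, wm n = (1 / a 0) * ∑ k ∈ Finset.Icc (-(n : ℤ) - 1) (-1 : ℤ), 1 / ρ k) →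
      ∀ (ψ : ℕ → ℝ≥0∞),
        (∀ n : ℕ, (ψ n) ^ 2 =
          (n : ℝ≥0∞) * (extF wp (invR vp (n : ℝ)) + extF wm (invR vm (n : ℝ)))) →
      ∀ (T : EuclideanSpace ℝ (Fin d) → ℤ → ℤ → ℝ),
        (∀ u k l, T u k l =
          (∑ s ∈ Finset.Icc k l, (∑ i, (η s i) * u i) * (ρ l / ρ s)) ^ 2 *
            (ρ (k - 1) / ρ l)) →
      ∀ (φ φp : EuclideanSpace ℝ (Fin d) → ℕ → ℝ≥0∞),
        (∀ u n, (φ u n) ^ 2 = (ψ n) ^ 2 +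
          ∑' z : {z : ℤ × ℤ // z.1 ≤ z.2 ∧
              (((-z.1).toNat : ℕ∞) ≤ invR vm (n : ℝ)) ∧
              ((z.2.toNat : ℕ∞) ≤ invR vp (n : ℝ))},
            ENNReal.ofReal (T u (z : ℤ × ℤ).1 (z : ℤ × ℤ).2)) →
        (∀ u n, (φp u n) ^ 2 = (ψ n) ^ 2 +
          ∑' z : {z : ℤ × ℤ // z.1 ≤ z.2 ∧
              (((-z.1).toNat : ℕ∞) ≤ invR vm (n : ℝ)) ∧
              ((z.2.toNat : ℕ∞) ≤ invR vp (n : ℝ)) ∧ 0 < z.1 * z.2},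
            ENNReal.ofReal (T u (z : ℤ × ℤ).1 (z : ℤ × ℤ).2)) →
      ∀ u : EuclideanSpace ℝ (Fin d), ‖u‖ = 1 →
      ∀ x K : ℝ, 1 ≤ x → 1 ≤ K →
        (((1 : ℕ∞) ≤ invE (φp u) (ENNReal.ofReal x)) →
          ENat.toENNReal (invE (φp u) (ENNReal.ofReal (K * x))) ≤
            ENNReal.ofReal (2 * K ^ 2 / δ) * ENat.toENNReal (invE (φp u) (ENNReal.ofReal x))) ∧
        (((1 : ℕ∞) ≤ invE (φ u) (ENNReal.ofReal x)) →
          ENat.toENNReal (invE (φ u) (ENNReal.ofReal (K * x))) ≤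
            ENNReal.ofReal (K ^ 2 / C) * ENat.toENNReal (invE (φ u) (ENNReal.ofReal x))) := by
  refine ⟨1 / (2 * ((1 + 1 / δ) / δ)), by positivity, ?_⟩
  intro d _ p q r hsum hmin μ _ _ _ m _ η _ a ha ρ hρ0 hρp hρm vp vm wp wm hvp hvm hwp hwm
    ψ hψ T hT φ φp hφ hφp u _ x K hx hK
  have hδ1 : δ ≤ 1 := by
    have h1 := hsum 0
    have h2 := hmin 0
    linarith [h2.1, h2.2.1, h2.2.2]
  have hp0 : ∀ n, 0 < p n := fun n => hδ.trans_le (hmin n).1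
  have hq0 : ∀ n, 0 < q n := fun n => hδ.trans_le (hmin n).2.1
  have ha0 : ∀ n, 0 < a n := fun n => by rw [ha]; exact div_pos (hq0 n) (hp0 n)
  have hpq : ∀ n, p n + q n ≤ 1 := fun n => by linarith [hsum n, (hmin n).2.2]
  have haδ : ∀ n, δ ≤ a n := fun n => by
    rw [ha, le_div_iff₀ (hp0 n)]
    nlinarith [hpq n, hp0 n, hq0 n, (hmin n).2.1]
  have ha1 : ∀ n, δ * (1 + a n) ≤ 1 := fun n => by
    have h := (hp0 n).ne'
    have e : 1 + a n = (p n + q n) / p n := by rw [ha]; field_simp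
    rw [e, ← mul_div_assoc, div_le_one (hp0 n)]
    nlinarith [hpq n, (hmin n).1, hp0 n, hq0 n]
  have ha2 : ∀ n, δ * (1 + 1 / a n) ≤ 1 := fun n => by
    have h := (hp0 n).ne'
    have h' := (hq0 n).ne'
    have e : 1 + 1 / a n = (p n + q n) / q n := by rw [ha]; field_simp; ring
    rw [e, ← mul_div_assoc, div_le_one (hq0 n)]
    nlinarith [hpq n, (hmin n).2.1, hp0 n, hq0 n]
  have hρN : ∀ n : ℕ, 0 < ρ n := by
    intro n
    induction n with
    | zero => simp [hρ0]
    | succ n ih =>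
      rw [hρp _ (by push_cast; omega)]
      have : ((n + 1 : ℕ) : ℤ) - 1 = n := by push_cast; ring
      rw [this]
      exact mul_pos ih (ha0 _)
  have hρM : ∀ n : ℕ, 0 < ρ (-(n : ℤ)) := by
    intro n
    induction n with
    | zero => simp [hρ0]
    | succ n ih =>
      rw [hρm _ (by push_cast; omega)]
      have : -((n + 1 : ℕ) : ℤ) + 1 = -n := by push_cast; ring
      rw [this]
      exact div_pos ih (ha0 _)
  have hρ : ∀ n, 0 < ρ n := by
    intro n
    obtain ⟨k, rfl | rfl⟩ := n.eq_nat_or_neg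
    · exact hρN k
    · exact hρM k
  have hT0 : ∀ k l, 0 ≤ T u k l := by
    intro k l
    rw [hT]
    exact mul_nonneg (sq_nonneg _) (div_nonneg (hρ _).le (hρ _).le)
  have hTm := T_mono ρ (fun s => ∑ i, (η s i) * u i) (T u) hρ (hT u)
  have hvp0 : vp 0 = 1 := by rw [hvp]; simp [hρ0]
  have hvm0 : vm 0 = 1 := by
    have h1 := hρm (-1) le_rfl
    have h2 := (ha0 0).ne'
    simp only [Int.reduceNeg, neg_add_cancel, hρ0] at h1
    rw [hvm]
    simp [h1, h2]
  -- positive half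
  have hvps : ∀ n, δ * vp (n + 1) ≤ vp n := by
    intro n
    have e : vp (n + 1) = vp n + ρ n * a (n + 1) := by
      rw [hvp, hvp, Nat.cast_succ, sum_Icc_succ 0 n (by omega), hρp _ (by omega)]
      simp
    have h1 : ρ n ≤ vp n := by
      rw [hvp]
      exact Finset.single_le_sum (f := ρ) (fun k _ => (hρ k).le) (by simp)
    rw [e]
    have h2 : ρ n * a (n + 1) ≤ vp n * a (n + 1) :=
      mul_le_mul_of_nonneg_right h1 (ha0 _).le
    have h3 := mul_le_mul_of_nonneg_left (ha1 (n + 1)) ((hρ n).le.trans h1)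
    nlinarith
  have hvms : ∀ n, δ * vm (n + 1) ≤ vm n := by
    intro n
    have eI : Finset.Icc (-((n + 1 : ℕ) : ℤ) - 1) (-1 : ℤ) =
        insert (-(n : ℤ) - 2) (Finset.Icc (-(n : ℤ) - 1) (-1 : ℤ)) := by
      ext z; simp only [Finset.mem_Icc, Finset.mem_insert]; push_cast; omega
    have e : vm (n + 1) = vm n + a 0 * (ρ (-(n : ℤ) - 1) / a (-(n : ℤ) - 1)) := by
      rw [hvm, hvm, eI, Finset.sum_insert (by simp; omega), hρm (-(n : ℤ) - 2) (by omega)]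
      have : -(n : ℤ) - 2 + 1 = -(n : ℤ) - 1 := by ring
      rw [this]; ring
    have h1 : a 0 * ρ (-(n : ℤ) - 1) ≤ vm n := by
      rw [hvm]
      exact mul_le_mul_of_nonneg_left
        (Finset.single_le_sum (f := ρ) (fun k _ => (hρ k).le) (by simp)) (ha0 0).le
    rw [e]
    have hi : 0 < 1 / a (-(n : ℤ) - 1) := one_div_pos.mpr (ha0 _)
    have h2 : a 0 * ρ (-(n : ℤ) - 1) * (1 / a (-(n : ℤ) - 1)) ≤ vm n * (1 / a (-(n : ℤ) - 1)) :=
      mul_le_mul_of_nonneg_right h1 hi.le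
    have h3 := mul_le_mul_of_nonneg_left (ha2 (-(n : ℤ) - 1))
      ((mul_pos (ha0 0) (hρ _)).le.trans h1)
    have e2 : a 0 * (ρ (-(n : ℤ) - 1) / a (-(n : ℤ) - 1)) =
      a 0 * ρ (-(n : ℤ) - 1) * (1 / a (-(n : ℤ) - 1)) := by ring
    rw [e2]
    nlinarith
  have hwp0 : ∀ n, 0 ≤ wp n := fun n => by
    rw [hwp]; exact Finset.sum_nonneg fun k _ => (one_div_pos.mpr (hρ k)).le
  have hwm0 : ∀ n, 0 ≤ wm n := fun n => by
    rw [hwm]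
    exact mul_nonneg (one_div_pos.mpr (ha0 0)).le
      (Finset.sum_nonneg fun k _ => (one_div_pos.mpr (hρ k)).le)
  have hwpm : ∀ i j : ℕ, i ≤ j → wp i ≤ wp j := fun i j hij => by
    rw [hwp, hwp]
    exact Finset.sum_le_sum_of_subset_of_nonneg (Finset.Icc_subset_Icc le_rfl (by omega))
      fun k _ _ => (one_div_pos.mpr (hρ k)).le
  have hwmm : ∀ i j : ℕ, i ≤ j → wm i ≤ wm j := fun i j hij => by
    rw [hwm, hwm]
    exact mul_le_mul_of_nonneg_left
      (Finset.sum_le_sum_of_subset_of_nonneg (Finset.Icc_subset_Icc (by omega) le_rfl)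
        fun k _ _ => (one_div_pos.mpr (hρ k)).le) (one_div_pos.mpr (ha0 0)).le
  -- finiteness of the inverses
  have hfin : ∀ n : ℕ, 1 ≤ n → ψ n ^ 2 ≠ ⊤ →
      invR vp (n : ℝ) ≠ ⊤ ∧ invR vm (n : ℝ) ≠ ⊤ := by
    intro n hn h
    rw [hψ] at h
    have hn0 : (n : ℝ≥0∞) ≠ 0 := by simp; omega
    constructor
    · intro ht
      apply h
      rw [ht]; simp [extF, ENNReal.mul_top hn0]
    · intro ht
      apply h
      rw [ht]; simp [extF, ENNReal.mul_top hn0]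
  have hψL : ∀ n i j : ℕ, invR vp (n : ℝ) = i → invR vm (n : ℝ) = j →
      ψ n ^ 2 = ENNReal.ofReal (n * (wp i + wm j)) := by
    intro n i j hi hj
    rw [hψ, hi, hj, ENNReal.ofReal_mul (by positivity), ENNReal.ofReal_add (hwp0 i) (hwm0 j)]
    simp [extF]
  have hData : ∀ N n : ℕ, 1 ≤ N → N ≤ n → ψ n ^ 2 ≠ ⊤ → ∃ i j i' j' : ℕ,
      invR vp (N : ℝ) = i ∧ invR vm (N : ℝ) = j ∧ invR vp (n : ℝ) = i' ∧ invR vm (n : ℝ) = j' ∧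
      i ≤ i' ∧ j ≤ j' ∧ vp i ≤ N ∧ vm j ≤ N ∧ δ * n ≤ vp i' ∧ δ * n ≤ vm j' := by
    intro N n hN hn h
    obtain ⟨h1, h2⟩ := hfin n (hN.trans hn) h
    have hNn : (N : ℝ) ≤ n := by exact_mod_cast hn
    have hN1 : (1 : ℝ) ≤ N := by exact_mod_cast hN
    have m1 := aux_inv_mono vp hNn
    have m2 := aux_inv_mono vm hNn
    obtain ⟨i', ei', -, hi'⟩ := aux_inv vp n (by linarith) h1
    obtain ⟨j', ej', -, hj'⟩ := aux_inv vm n (by linarith) h2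
    obtain ⟨i, ei, hi, -⟩ := aux_inv vp N (by linarith) (ne_top_of_le_ne_top h1 m1)
    obtain ⟨j, ej, hj, -⟩ := aux_inv vm N (by linarith) (ne_top_of_le_ne_top h2 m2)
    refine ⟨i, j, i', j', ei, ej, ei', ej', ?_, ?_, hi, hj, ?_, ?_⟩
    · rw [ei, ei'] at m1; exact_mod_cast m1
    · rw [ej, ej'] at m2; exact_mod_cast m2
    · exact (mul_le_mul_of_nonneg_left hi'.le hδ.le).trans (hvps i')
    · exact (mul_le_mul_of_nonneg_left hj'.le hδ.le).trans (hvms j')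
  have hD0 : ∀ A B, 0 ≤ ∑ z ∈ pairsF A B, T u z.1 z.2 :=
    fun A B => Finset.sum_nonneg fun z _ => hT0 _ _
  have hvmW : ∀ j : ℕ, ∑ k ∈ Finset.Icc (-(j : ℤ) - 1) (-1 : ℤ), ρ k = vm j / a 0 := by
    intro j
    have := (ha0 0).ne'
    rw [hvm]; field_simp
  have hvp_nn : ∀ n, 0 ≤ vp n := fun n => by
    rw [hvp]; exact Finset.sum_nonneg fun k _ => (hρ k).le
  have hvm_nn : ∀ n, 0 ≤ vm n := fun n => by
    rw [hvm]; exact mul_nonneg (ha0 0).le (Finset.sum_nonneg fun k _ => (hρ k).le)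
  have hfW : ∀ i j : ℕ, ∑ k ∈ Finset.Icc (-(j : ℤ) - 1) (i : ℤ), ρ k = vm j / a 0 + vp i := by
    intro i j
    rw [← hvmW, hvp, ← Finset.sum_union]
    · congr 1
      ext z; simp only [Finset.mem_Icc, Finset.mem_union]; omega
    · rw [Finset.disjoint_left]
      intro z; simp only [Finset.mem_Icc]; omega
  constructor
  · intro h1
    have hA : 1 ≤ 1 / δ := by rw [le_div_iff₀ hδ]; linarith
    have hB : 2 * K ^ 2 / δ = 2 * (1 / δ) * K ^ 2 := by ring
    rw [hB]
    refine aux_final (φp u) (1 / δ) hA ?_ x K hx hK h1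
    intro N n hN hn hne
    have hψn : ψ n ^ 2 ≠ ⊤ :=
      ne_top_of_le_ne_top (ENNReal.pow_ne_top hne (n := 2)) (by rw [hφp]; exact le_self_add)
    obtain ⟨i, j, i', j', ei, ej, ei', ej', hi, hj, vi, vj, vi', vj'⟩ := hData N n hN hn hψn
    have hsumD : ∀ (n i j : ℕ), invR vp (n : ℝ) = i → invR vm (n : ℝ) = j →
        φp u n ^ 2 = ENNReal.ofReal (n * (wp i + wm j) +
          ((∑ z ∈ pairsF 0 i, T u z.1 z.2) + ∑ z ∈ pairsF (-(j : ℤ) - 1) (-1), T u z.1 z.2)) := by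
      intro n i j hi hj
      have hdis : Disjoint (pairsF 0 i) (pairsF (-(j : ℤ) - 1) (-1)) := by
        rw [Finset.disjoint_left]
        intro z; rw [mem_pairsF, mem_pairsF]; omega
      rw [ENNReal.ofReal_add (mul_nonneg (by positivity) (add_nonneg (hwp0 i) (hwm0 j)))
        (add_nonneg (hD0 _ _) (hD0 _ _)), ← hψL n i j hi hj, hφp, ← Finset.sum_union hdis]
      congr 1
      apply tsum_pairs _ _ _ (T u) hT0
      rintro ⟨k, l⟩
      rw [Finset.mem_union, mem_pairsF, mem_pairsF, hi, hj]
      simp only [Nat.cast_le]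
      constructor
      · rintro ⟨h1, h2, h3, h4⟩
        rcases pos_and_pos_or_neg_and_neg_of_mul_pos h4 with h | h <;> omega
      · rintro (h | h)
        · exact ⟨by omega, by omega, by omega, mul_pos (by omega) (by omega)⟩
        · exact ⟨by omega, by omega, by omega, mul_pos_of_neg_of_neg (by omega) (by omega)⟩
    have hw : wp i + wm j ≤ wp i' + wm j' := add_le_add (hwpm _ _ hi) (hwmm _ _ hj)
    have hw0 := add_nonneg (hwp0 i) (hwm0 j)
    refine ⟨_, _, ?_, ?_, hsumD N i j ei ej, hsumD n i' j' ei' ej', ?_⟩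
    · have := hD0 0 i
      have := hD0 (-(j : ℤ) - 1) (-1)
      positivity
    · have := hD0 0 i'
      have := hD0 (-(j' : ℤ) - 1) (-1)
      have := hw0.trans hw
      positivity
    have c1 := hTm 0 i 0 i' le_rfl (by omega) (by omega)
    have c2 := hTm (-(j : ℤ) - 1) (-1) (-(j' : ℤ) - 1) (-1) (by omega) (by omega) le_rfl
    rw [← hvp, ← hvp] at c1
    rw [hvmW, hvmW, ← mul_div_assoc, ← mul_div_assoc,
      div_le_div_iff_of_pos_right (ha0 0)] at c2
    have d1 := hD0 0 i
    have d2 := hD0 (-(j : ℤ) - 1) (-1)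
    have d1' := hD0 0 i'
    have d2' := hD0 (-(j' : ℤ) - 1) (-1)
    generalize (∑ z ∈ pairsF 0 i, T u z.1 z.2) = D1 at *
    generalize (∑ z ∈ pairsF (-(j : ℤ) - 1) (-1), T u z.1 z.2) = D2 at *
    generalize (∑ z ∈ pairsF 0 i', T u z.1 z.2) = D1' at *
    generalize (∑ z ∈ pairsF (-(j' : ℤ) - 1) (-1), T u z.1 z.2) = D2' at *
    have f1 : D1 * (δ * n) ≤ D1' * N :=
      (mul_le_mul_of_nonneg_left vi' d1).trans (c1.trans (mul_le_mul_of_nonneg_left vi d1'))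
    have f2 : D2 * (δ * n) ≤ D2' * N :=
      (mul_le_mul_of_nonneg_left vj' d2).trans (c2.trans (mul_le_mul_of_nonneg_left vj d2'))
    have f3 : δ * ((n : ℝ) * (N * (wp i + wm j))) ≤ 1 * ((n : ℝ) * (N * (wp i' + wm j'))) := by
      gcongr
    have e : 1 / δ * (N : ℝ) * (n * (wp i' + wm j') + (D1' + D2')) =
      (N * (n * (wp i' + wm j') + (D1' + D2'))) / δ := by ring
    rw [e, le_div_iff₀ hδ]
    linarith
  · intro h1
    have hd1 : 1 ≤ 1 / δ := by rw [le_div_iff₀ hδ]; linarith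
    have hA : 1 ≤ (1 + 1 / δ) / δ := by rw [le_div_iff₀ hδ]; linarith
    have hB : K ^ 2 / (1 / (2 * ((1 + 1 / δ) / δ))) = 2 * ((1 + 1 / δ) / δ) * K ^ 2 := by
      rw [div_div_eq_mul_div, div_one, mul_comm]
    rw [hB]
    refine aux_final (φ u) ((1 + 1 / δ) / δ) hA ?_ x K hx hK h1
    intro N n hN hn hne
    have hψn : ψ n ^ 2 ≠ ⊤ :=
      ne_top_of_le_ne_top (ENNReal.pow_ne_top hne (n := 2)) (by rw [hφ]; exact le_self_add)
    obtain ⟨i, j, i', j', ei, ej, ei', ej', hi, hj, vi, vj, vi', vj'⟩ := hData N n hN hn hψn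
    have hsumD : ∀ (n i j : ℕ), invR vp (n : ℝ) = i → invR vm (n : ℝ) = j →
        φ u n ^ 2 = ENNReal.ofReal (n * (wp i + wm j) +
          (∑ z ∈ pairsF (-(j : ℤ) - 1) i, T u z.1 z.2)) := by
      intro n i j hi hj
      rw [ENNReal.ofReal_add (mul_nonneg (by positivity) (add_nonneg (hwp0 i) (hwm0 j)))
        (hD0 _ _), ← hψL n i j hi hj, hφ]
      congr 1
      apply tsum_pairs _ _ _ (T u) hT0
      rintro ⟨k, l⟩
      rw [mem_pairsF, hi, hj]
      simp only [Nat.cast_le]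
      omega
    have hw : wp i + wm j ≤ wp i' + wm j' := add_le_add (hwpm _ _ hi) (hwmm _ _ hj)
    have hw0 := add_nonneg (hwp0 i) (hwm0 j)
    refine ⟨_, _, ?_, ?_, hsumD N i j ei ej, hsumD n i' j' ei' ej', ?_⟩
    · have := hD0 (-(j : ℤ) - 1) i
      positivity
    · have := hD0 (-(j' : ℤ) - 1) i'
      have := hw0.trans hw
      positivity
    have c := hTm (-(j : ℤ) - 1) i (-(j' : ℤ) - 1) i' (by omega) (by omega) (by omega)
    rw [hfW, hfW] at c
    have d1 := hD0 (-(j : ℤ) - 1) i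
    have d1' := hD0 (-(j' : ℤ) - 1) i'
    generalize (∑ z ∈ pairsF (-(j : ℤ) - 1) i, T u z.1 z.2) = D at *
    generalize (∑ z ∈ pairsF (-(j' : ℤ) - 1) i', T u z.1 z.2) = D' at *
    have g1 : δ * n ≤ vm j' / a 0 + vp i' := by
      have := div_nonneg (hvm_nn j') (ha0 0).le
      linarith
    have g2 : vm j / a 0 + vp i ≤ (1 + 1 / δ) * N := by
      have : vm j / a 0 ≤ N / δ := div_le_div₀ (by positivity) vj hδ (haδ 0)
      have e : (1 + 1 / δ) * (N : ℝ) = N / δ + N := by ring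
      linarith
    have f1 : D * (δ * n) ≤ D' * ((1 + 1 / δ) * N) :=
      (mul_le_mul_of_nonneg_left g1 d1).trans (c.trans (mul_le_mul_of_nonneg_left g2 d1'))
    have f3 : δ * ((n : ℝ) * (N * (wp i + wm j))) ≤
        (1 + 1 / δ) * ((n : ℝ) * (N * (wp i' + wm j'))) := by
      gcongr
      linarith
    have e : (1 + 1 / δ) / δ * (N : ℝ) * (n * (wp i' + wm j') + D') =
      ((1 + 1 / δ) * (N * (n * (wp i' + wm j') + D'))) / δ := by ring
    rw [e, le_div_iff₀ hδ]
    linarith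
end

section
/- Let $(\rho_k)_{k\ge0}$ be positive reals with $\rho_0=1$, let $(c_s)_{s\ge1}$ be reals, set $v_+(n)=\sum_{k=0}^n\rho_k$, $\zeta_k^l=\sum_{s=k}^l c_s/\rho_s$ (with $\zeta_k^l=0$ if $k>l$), and $\kappa(n)=\sum_{0\le k<l\le n}\rho_k\rho_l(\zeta_{k+1}^l)^2$. Then for every $n\ge1$: $\kappa(n)=v_+(n)\sum_{0\le k<n}\rho_k(\zeta_{k+1}^n)^2-\Big(\sum_{0\le k\le n}\rho_k\zeta_{k+1}^n\Big)^2$ and $\frac{\kappa(n)}{v_+(n)}=\frac{\kappa(n-1)}{v_+(n-1)}+\frac{\rho_n}{v_+(n)v_+(n-1)}\Big(\sum_{0\le k<n}\rho_k\zeta_{k+1}^n\Big)^2$; in particular $n\mapsto\kappa(n)/v_+(n)$ is non-decreasing. -/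
/-- The quadratic-form identity for `κ(n) = ∑_{0≤k<l≤n} ρ k ρ l (ζ_{k+1}^l)²`
and the resulting monotonicity of `n ↦ κ(n)/v(n)`. -/
theorem stmt_9
    (ρ : ℕ → ℝ) (hρpos : ∀ k, 0 < ρ k) (hρ0 : ρ 0 = 1)
    (c : ℕ → ℝ)
    (v : ℕ → ℝ) (hv : ∀ n, v n = ∑ k ∈ Finset.range (n + 1), ρ k)
    (ζ : ℕ → ℕ → ℝ) (hζ : ∀ k l, ζ k l = ∑ s ∈ Finset.Icc k l, c s / ρ s)
    (κ : ℕ → ℝ)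
    (hκ : ∀ n, κ n = ∑ l ∈ Finset.range (n + 1), ∑ k ∈ Finset.range l,
      ρ k * ρ l * (ζ (k + 1) l) ^ 2) :
    (∀ n : ℕ, 1 ≤ n →
      κ n = v n * (∑ k ∈ Finset.range n, ρ k * (ζ (k + 1) n) ^ 2) -
        (∑ k ∈ Finset.range (n + 1), ρ k * ζ (k + 1) n) ^ 2) ∧
    (∀ n : ℕ, 1 ≤ n →
      κ n / v n = κ (n - 1) / v (n - 1) +
        ρ n / (v n * v (n - 1)) * (∑ k ∈ Finset.range n, ρ k * ζ (k + 1) n) ^ 2) ∧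
    Monotone (fun n => κ n / v n) := by
  have hvs : ∀ n, v (n + 1) = v n + ρ (n + 1) := by
    intro n
    rw [hv, hv, Finset.sum_range_succ]
  have hvpos : ∀ n, 0 < v n := by
    intro n
    rw [hv]
    exact Finset.sum_pos (fun k _ => hρpos k) ⟨0, by simp⟩
  have hz0 : ∀ n, ζ (n + 1) n = 0 := by
    intro n
    rw [hζ, Finset.Icc_eq_empty (by omega), Finset.sum_empty]
  have hzs : ∀ n k, k ∈ Finset.range (n + 1) →
      ζ (k + 1) (n + 1) = ζ (k + 1) n + c (n + 1) / ρ (n + 1) := by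
    intro n k hk
    have := Finset.mem_range.mp hk
    rw [hζ, hζ, Finset.sum_Icc_succ_top (by omega)]
  have hA : ∀ n, ∑ k ∈ Finset.range (n + 1), ρ k * (ζ (k + 1) (n + 1)) ^ 2 =
      ∑ k ∈ Finset.range n, ρ k * (ζ (k + 1) n) ^ 2
        + 2 * (c (n + 1) / ρ (n + 1)) * ∑ k ∈ Finset.range n, ρ k * ζ (k + 1) n
        + (c (n + 1) / ρ (n + 1)) ^ 2 * v n := by
    intro n
    have h1 : ∑ k ∈ Finset.range n, ρ k * (ζ (k + 1) n) ^ 2 =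
        ∑ k ∈ Finset.range (n + 1), ρ k * (ζ (k + 1) n) ^ 2 := by
      rw [Finset.sum_range_succ, hz0]; ring
    have h2 : ∑ k ∈ Finset.range n, ρ k * ζ (k + 1) n =
        ∑ k ∈ Finset.range (n + 1), ρ k * ζ (k + 1) n := by
      rw [Finset.sum_range_succ, hz0]; ring
    rw [h1, h2, hv, Finset.mul_sum, Finset.mul_sum, ← Finset.sum_add_distrib,
      ← Finset.sum_add_distrib]
    refine Finset.sum_congr rfl fun k hk => ?_
    rw [hzs n k hk]; ring
  have hB : ∀ n, ∑ k ∈ Finset.range (n + 1), ρ k * ζ (k + 1) (n + 1) =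
      ∑ k ∈ Finset.range n, ρ k * ζ (k + 1) n + (c (n + 1) / ρ (n + 1)) * v n := by
    intro n
    have h2 : ∑ k ∈ Finset.range n, ρ k * ζ (k + 1) n =
        ∑ k ∈ Finset.range (n + 1), ρ k * ζ (k + 1) n := by
      rw [Finset.sum_range_succ, hz0]; ring
    rw [h2, hv, Finset.mul_sum, ← Finset.sum_add_distrib]
    refine Finset.sum_congr rfl fun k hk => ?_
    rw [hzs n k hk]; ring
  have hκs : ∀ n, κ (n + 1) = κ n +
      ρ (n + 1) * ∑ k ∈ Finset.range (n + 1), ρ k * (ζ (k + 1) (n + 1)) ^ 2 := by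
    intro n
    rw [hκ, hκ, Finset.sum_range_succ, Finset.mul_sum]
    congr 1
    exact Finset.sum_congr rfl fun k _ => by ring
  have key : ∀ n, κ n = v n * (∑ k ∈ Finset.range n, ρ k * (ζ (k + 1) n) ^ 2) -
        (∑ k ∈ Finset.range n, ρ k * ζ (k + 1) n) ^ 2 := by
    intro n
    induction n with
    | zero => rw [hκ]; simp
    | succ n ih =>
      rw [hκs, hB, hvs, ih, hA]; ring
  have step : ∀ n, κ (n + 1) / v (n + 1) = κ n / v n +
        ρ (n + 1) / (v (n + 1) * v n) *
          (∑ k ∈ Finset.range (n + 1), ρ k * ζ (k + 1) (n + 1)) ^ 2 := by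
    intro n
    have h1 := hκs n
    have h2 := key (n + 1)
    have h3 := (hvpos n).ne'
    have h4 := (hvpos (n + 1)).ne'
    generalize (∑ k ∈ Finset.range (n + 1), ρ k * ζ (k + 1) (n + 1)) = B at *
    generalize (∑ k ∈ Finset.range (n + 1), ρ k * (ζ (k + 1) (n + 1)) ^ 2) = A at *
    have h5 : κ n = v n * A - B ^ 2 := by
      rw [hvs] at h2; linarith
    have h6 : ρ (n + 1) = v (n + 1) - v n := by rw [hvs]; ring
    rw [h2, h5, h6]
    field_simp
    ring
  refine ⟨fun n _ => ?_, fun n hn => ?_, monotone_nat_of_le_succ fun n => ?_⟩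
  · rw [key, Finset.sum_range_succ _ n, hz0, mul_zero, add_zero]
  · obtain ⟨m, rfl⟩ : ∃ m, n = m + 1 := ⟨n - 1, by omega⟩
    exact step m
  · have h1 := hρpos (n + 1)
    have h3 := hvpos n
    have h4 := hvpos (n + 1)
    show κ n / v n ≤ κ (n + 1) / v (n + 1)
    rw [step]
    exact le_add_of_nonneg_right (by positivity)
end

section
/- Assume $\delta\le a_n\le1/\delta$ for all $n\ge1$ and $v_+(n)\to+\infty$. Define $\psi_+(n)\ge0$ by $\psi_+^2(n)=n\,w_+\circ v_+^{-1}(n)$ and $\Theta_+(n)\ge0$ by $\Theta_+^2(n)=\sum_{1\le k\le l\le n}\rho_l/\rho_k$. Then there exist $C>0$ and $x_0>0$ such that for all $x\ge x_0$: $(1/C)\,v_+\big(\Theta_+^{-1}(x)\big)\le\psi_+^{-1}(x)\le C\,v_+\big(\Theta_+^{-1}(x)\big)$. -/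
/-- Generalized inverse of a non-decreasing function `ℕ → ℝ` at `x`:
`sup {n | f n ≤ x}` (with `sup ∅ = 0`; under the hypotheses below the sets are bounded). -/
noncomputable def invN (f : ℕ → ℝ) (x : ℝ) : ℕ := sSup {n : ℕ | f n ≤ x}

theorem invN_mem (f : ℕ → ℝ) (x : ℝ) (h0 : f 0 ≤ x) (B : ℕ) (hB : ∀ n, f n ≤ x → n ≤ B) :
    f (invN f x) ≤ x :=
  Nat.sSup_mem (s := {n : ℕ | f n ≤ x}) ⟨0, h0⟩ ⟨B, fun n hn => hB n hn⟩

theorem le_invN (f : ℕ → ℝ) (x : ℝ) (B : ℕ) (hB : ∀ n, f n ≤ x → n ≤ B) (n : ℕ) (hn : f n ≤ x) :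
    n ≤ invN f x :=
  le_csSup (s := {n : ℕ | f n ≤ x}) ⟨B, fun n hn => hB n hn⟩ hn

/-- Comparison of the inverse of `ψ₊` (where `ψ₊²(n) = n · w₊(v₊⁻¹(n))`) with
`v₊ ∘ Θ₊⁻¹` (where `Θ₊²(n) = ∑_{1≤k≤l≤n} ρ l / ρ k`), up to multiplicative constants. -/
theorem stmt_10
    (δ : ℝ) (hδ0 : 0 < δ) (hδ1 : δ < 1)
    (a : ℕ → ℝ) (ha : ∀ n : ℕ, 1 ≤ n → δ ≤ a n ∧ a n ≤ 1 / δ)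
    (ρ : ℕ → ℝ) (hρ0 : ρ 0 = 1)
    (hρ : ∀ n : ℕ, 1 ≤ n → ρ n = ρ (n - 1) * a n)
    (v w : ℕ → ℝ)
    (hv : ∀ n, v n = ∑ k ∈ Finset.range (n + 1), ρ k)
    (hw : ∀ n, w n = ∑ k ∈ Finset.range (n + 1), 1 / ρ k)
    (hvlim : Filter.Tendsto v Filter.atTop Filter.atTop)
    (ψ Θ : ℕ → ℝ)
    (hψ0 : ∀ n, 0 ≤ ψ n) (hψ : ∀ n : ℕ, (ψ n) ^ 2 = n * w (invN v n))
    (hΘ0 : ∀ n, 0 ≤ Θ n)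
    (hΘ : ∀ n : ℕ, (Θ n) ^ 2 = ∑ l ∈ Finset.Icc 1 n, ∑ k ∈ Finset.Icc 1 l, ρ l / ρ k) :
    ∃ C : ℝ, 0 < C ∧ ∃ x₀ : ℝ, 0 < x₀ ∧ ∀ x : ℝ, x₀ ≤ x →
      (1 / C) * v (invN Θ x) ≤ (invN ψ x : ℝ) ∧ (invN ψ x : ℝ) ≤ C * v (invN Θ x) := by
  have hpos : ∀ n, 0 < ρ n := by
    intro n
    induction n with
    | zero => rw [hρ0]; exact one_pos
    | succ n ih =>
      rw [hρ (n + 1) (by omega), Nat.add_sub_cancel]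
      exact mul_pos ih (lt_of_lt_of_le hδ0 (ha (n + 1) (by omega)).1)
  have hipos : ∀ n, 0 < 1 / ρ n := fun n => one_div_pos.mpr (hpos n)
  have hv0 : v 0 = 1 := by simp [hv, hρ0]
  have hw0 : w 0 = 1 := by simp [hw, hρ0]
  have hvs : ∀ n, v (n + 1) = v n + ρ (n + 1) := by
    intro n; rw [hv, hv, Finset.sum_range_succ]
  have hws : ∀ n, w (n + 1) = w n + 1 / ρ (n + 1) := by
    intro n; rw [hw, hw, Finset.sum_range_succ]
  have hvm : Monotone v := monotone_nat_of_le_succ (fun n => by rw [hvs]; linarith [hpos (n + 1)])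
  have hwm : Monotone w := monotone_nat_of_le_succ (fun n => by rw [hws]; linarith [hipos (n + 1)])
  have hv1 : ∀ n, 1 ≤ v n := fun n => hv0 ▸ hvm (Nat.zero_le n)
  have hw1 : ∀ n, 1 ≤ w n := fun n => hw0 ▸ hwm (Nat.zero_le n)
  have hρv : ∀ n, ρ n ≤ v n := by
    intro n
    cases n with
    | zero => rw [hρ0, hv0]
    | succ n => rw [hvs]; linarith [hv1 n]
  obtain ⟨K, hK⟩ : ∃ K : ℝ, K = 1 + 1 / δ := ⟨_, rfl⟩
  have hid : 1 < 1 / δ := by rw [lt_div_iff₀ hδ0]; linarith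
  have hK1 : 1 < K := by linarith
  have hvK : ∀ n, v (n + 1) ≤ K * v n := by
    intro n
    have h1 : ρ (n + 1) ≤ v n * (1 / δ) := by
      rw [hρ (n + 1) (by omega), Nat.add_sub_cancel]
      have := ha (n + 1) (by omega)
      exact mul_le_mul (hρv n) this.2 (by linarith [this.1]) (by linarith [hv1 n])
    rw [hvs, hK]; linarith
  have hwK : ∀ M, 1 ≤ M → w M ≤ K * (w M - 1) := by
    intro M hM
    have h1 : w 1 ≤ w M := hwm hM
    have h2 : w 1 = 1 + 1 / ρ 1 := by rw [hws 0, hw0]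
    have h3 : ρ 1 ≤ 1 / δ := by
      rw [hρ 1 le_rfl, Nat.sub_self, hρ0, one_mul]; exact (ha 1 le_rfl).2
    have h4 : δ ≤ 1 / ρ 1 := by
      rw [le_div_iff₀ (hpos 1)]
      rw [le_div_iff₀ hδ0] at h3; linarith
    have h5 : 1 ≤ 1 / δ * (w M - 1) := by
      rw [one_div, ← div_eq_inv_mul, le_div_iff₀ hδ0]; linarith
    rw [hK]; linarith
  -- bounds of the level sets
  have hvB : ∀ x : ℝ, ∃ B : ℕ, ∀ n, v n ≤ x → n ≤ B := by
    intro x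
    obtain ⟨B, hB⟩ := (hvlim.eventually_gt_atTop x).exists
    exact ⟨B, fun n hn => by
      by_contra h
      push Not at h
      linarith [hvm h.le]⟩
  have hsqB : ∀ f : ℕ → ℝ, (∀ n : ℕ, (n : ℝ) ≤ (f n) ^ 2) → (∀ n, 0 ≤ f n) → ∀ x : ℝ,
      ∃ B : ℕ, ∀ n, f n ≤ x → n ≤ B := by
    intro f hf hf0 x
    refine ⟨⌈x ^ 2⌉₊, fun n hn => ?_⟩
    have h1 := pow_le_pow_left₀ (hf0 n) hn 2
    have h2 := Nat.le_ceil (x ^ 2)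
    have := hf n
    exact_mod_cast this.trans (h1.trans h2)
  have hψB := hsqB ψ (fun n => by
    rw [hψ]
    exact le_mul_of_one_le_right (Nat.cast_nonneg n) (hw1 _)) hψ0
  have hΘB := hsqB Θ (fun n => by
    rw [hΘ]
    have : ∀ l ∈ Finset.Icc 1 n, (1 : ℝ) ≤ ∑ k ∈ Finset.Icc 1 l, ρ l / ρ k := by
      intro l hl
      rw [Finset.mem_Icc] at hl
      have h := Finset.single_le_sum (f := fun k => ρ l / ρ k) (s := Finset.Icc 1 l) (a := l)
        (fun k _ => (div_pos (hpos l) (hpos k)).le) (Finset.mem_Icc.mpr ⟨hl.1, le_rfl⟩)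
      have h2 : ρ l / ρ l = 1 := div_self (hpos l).ne'
      simp only [h2] at h
      exact h
    have h := Finset.sum_le_sum this
    simpa using h) hΘ0
  have hΘz : Θ 0 = 0 := by
    have := hΘ 0
    simpa using this
  have hψz : ψ 0 = 0 := by
    have := hψ 0
    simpa using this
  -- inverse of v
  have hvinv : ∀ m : ℕ, 1 ≤ m → v (invN v m) ≤ m ∧ (m : ℝ) ≤ v (invN v m + 1) := by
    intro m hm
    obtain ⟨B, hB⟩ := hvB m
    refine ⟨invN_mem v m (by rw [hv0]; exact_mod_cast hm) B hB, ?_⟩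
    by_contra h
    push Not at h
    have := le_invN v m B hB _ h.le
    omega
  -- upper bound of Θ
  have hΘup : ∀ n, (Θ n) ^ 2 ≤ v n * w n := by
    intro n
    rw [hΘ, hv, hw, Finset.sum_mul]
    refine (Finset.sum_le_sum (f := fun l => ∑ k ∈ Finset.Icc 1 l, ρ l / ρ k)
      (g := fun l => ρ l * ∑ k ∈ Finset.range (n + 1), 1 / ρ k) ?_).trans
      (Finset.sum_le_sum_of_subset_of_nonneg ?_ ?_)
    · intro l hl
      rw [Finset.mem_Icc] at hl
      simp only [Finset.mul_sum, mul_one_div]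
      refine Finset.sum_le_sum_of_subset_of_nonneg ?_ ?_
      · intro k hk
        rw [Finset.mem_Icc] at hk
        rw [Finset.mem_range]; omega
      · intro k _ _
        exact (div_pos (hpos l) (hpos k)).le
    · intro k hk
      rw [Finset.mem_Icc] at hk
      rw [Finset.mem_range]; omega
    · intro l _ _
      exact mul_nonneg (hpos l).le (Finset.sum_nonneg fun k _ => (hipos k).le)
  have hsw : ∀ M, ∑ k ∈ Finset.Icc 1 M, 1 / ρ k = w M - 1 := by
    intro M
    induction M with
    | zero => simp [hw0]
    | succ M ih => rw [Finset.sum_Icc_succ_top (by omega), ih, hws]; ring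
  have hsv : ∀ M N, M ≤ N → ∑ l ∈ Finset.Icc (M + 1) N, ρ l = v N - v M := by
    intro M N h
    induction N, h using Nat.le_induction with
    | base => simp
    | succ N h ih => rw [Finset.sum_Icc_succ_top (by omega), ih, hvs]; ring
  have hΘlow : ∀ M N, M ≤ N → (v N - v M) * (w M - 1) ≤ (Θ N) ^ 2 := by
    intro M N h
    rw [hΘ, ← hsv M N h, ← hsw M, Finset.sum_mul]
    refine (Finset.sum_le_sum (g := fun l => ∑ k ∈ Finset.Icc 1 l, ρ l / ρ k)
      (f := fun l => ρ l * ∑ k ∈ Finset.Icc 1 M, 1 / ρ k) ?_).trans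
      (Finset.sum_le_sum_of_subset_of_nonneg ?_ ?_)
    · intro l hl
      rw [Finset.mem_Icc] at hl
      simp only [Finset.mul_sum, mul_one_div]
      refine Finset.sum_le_sum_of_subset_of_nonneg ?_ ?_
      · exact Finset.Icc_subset_Icc le_rfl (by omega)
      · intro k _ _
        exact (div_pos (hpos l) (hpos k)).le
    · exact Finset.Icc_subset_Icc (by omega) le_rfl
    · intro l _ _
      exact Finset.sum_nonneg fun k _ => (div_pos (hpos l) (hpos k)).le
  refine ⟨4 * K, by linarith, K + ψ 1, by linarith [hψ0 1], fun x hx => ?_⟩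
  have hxK : K ≤ x := by linarith [hψ0 1]
  have hx0 : 0 ≤ x := by linarith
  have hxx : K ≤ x ^ 2 := by nlinarith
  obtain ⟨B1, hB1⟩ := hψB x
  obtain ⟨B2, hB2⟩ := hΘB x
  have hψmem := invN_mem ψ x (by rw [hψz]; exact hx0) B1 hB1
  have hΘmem := invN_mem Θ x (by rw [hΘz]; exact hx0) B2 hB2
  have hψle := le_invN ψ x B1 hB1
  have hΘle := le_invN Θ x B2 hB2
  have hm1 : 1 ≤ invN ψ x := hψle 1 (by linarith)
  constructor
  · obtain ⟨N, hN⟩ : ∃ N, N = invN Θ x := ⟨_, rfl⟩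
    rw [← hN] at hΘmem ⊢
    have hΘ2 := pow_le_pow_left₀ (hΘ0 N) hΘmem 2
    obtain ⟨m, hm⟩ : ∃ m : ℕ, m = ⌊v N / (2 * K)⌋₊ := ⟨_, rfl⟩
    have hK0 : 0 < 2 * K := by linarith
    have hma : (m : ℝ) * (2 * K) ≤ v N := by
      rw [← le_div_iff₀ hK0, hm]
      exact Nat.floor_le (div_nonneg (by linarith [hv1 N]) hK0.le)
    have hmb : v N < (m + 1 : ℝ) * (2 * K) := by
      rw [← div_lt_iff₀ hK0, hm]
      exact Nat.lt_floor_add_one _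
    have hmle : m ≤ invN ψ x := by
      apply hψle
      rcases Nat.eq_zero_or_pos m with h0 | hmp
      · rw [h0, hψz]; exact hx0
      refine (abs_le_of_sq_le_sq' ?_ hx0).2
      rw [hψ]
      obtain ⟨hM1, hM2⟩ := hvinv m hmp
      obtain ⟨M, hM⟩ : ∃ M, M = invN v m := ⟨_, rfl⟩
      rw [← hM] at hM1 hM2 ⊢
      have hmpos : (1 : ℝ) ≤ m := by exact_mod_cast hmp
      rcases Nat.eq_zero_or_pos M with h0 | hMp
      · rw [h0] at hM2 ⊢
        rw [hw0]
        have := hvK 0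
        rw [hv0] at this
        linarith
      have h2m : 2 * (m : ℝ) ≤ v N := by nlinarith
      have hMN : M ≤ N := by
        by_contra h
        push Not at h
        linarith [hvm h.le]
      have h1 := hΘlow M N hMN
      have h2 := hwK M hMp
      have h3 : (m : ℝ) * w M ≤ m * (K * (w M - 1)) := mul_le_mul_of_nonneg_left h2 (by linarith)
      have h4 : (m * K) * (w M - 1) ≤ (v N - v M) * (w M - 1) :=
        mul_le_mul_of_nonneg_right (by linarith) (by linarith [hw1 M])
      linarith
    have hmle' : (m : ℝ) ≤ (invN ψ x : ℝ) := by exact_mod_cast hmle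
    have hm1' : (1 : ℝ) ≤ (invN ψ x : ℝ) := by exact_mod_cast hm1
    rw [one_div, ← div_eq_inv_mul, div_le_iff₀ (by linarith)]
    nlinarith
  · obtain ⟨m, hm⟩ : ∃ m, m = invN ψ x := ⟨_, rfl⟩
    rw [← hm] at hψmem hm1 ⊢
    obtain ⟨hM1, hM2⟩ := hvinv m hm1
    have hψ2 := pow_le_pow_left₀ (hψ0 m) hψmem 2
    rw [hψ] at hψ2
    have h1 := hΘup (invN v m)
    have h2 := mul_le_mul_of_nonneg_right hM1 (by linarith [hw1 (invN v m)] : 0 ≤ w (invN v m))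
    have h3 : Θ (invN v m) ≤ x := abs_le_of_sq_le_sq' (by linarith) hx0 |>.2
    have h4 := hvm (hΘle _ h3)
    have h5 := hvK (invN v m)
    have h6 := hv1 (invN Θ x)
    nlinarith
end

section
/- Assume $\delta\le a_n\le1/\delta$ for all $n\ge1$ and $v_+(n)\to+\infty$. For $0<t<1$ define real sequences $\beta_{-1}(t)=0$, $\beta_0(t)=1$, $\beta_n(t)=\big(b_n/(1-t^2)\big)\beta_{n-1}(t)-a_n\beta_{n-2}(t)$ for $n\ge1$, and set $R(t)=1-\sum_{n\ge1}\rho_n/\big(\beta_n(t)\beta_{n-1}(t)\big)$. Then there exist $\alpha\ge1$ and $t_0>0$ such that for all $0<t<t_0$: $\frac{1}{\alpha}\le R(t)\cdot\psi_+^{-1}(1/t)\le\alpha$, where $\psi_+(n)\ge0$ is defined by $\psi_+^2(n)=n\,w_+\circ v_+^{-1}(n)$. -/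
/-- The pair (solution, scaled difference) of the second order recurrence. -/
noncomputable def solPair (ρ : ℕ → ℝ) (l x : ℝ) : ℕ → ℝ × ℝ
  | 0 => (1, x)
  | n + 1 =>
    let p := solPair ρ l x n
    (p.1 + ρ (n + 1) * (p.2 + l * (1 / ρ (n + 1) + 1 / ρ n) * p.1),
      p.2 + l * (1 / ρ (n + 1) + 1 / ρ n) * p.1)

section core
variable (ρ : ℕ → ℝ) (l : ℝ)

lemma sol_snd (x : ℝ) (n : ℕ) : (solPair ρ l x (n + 1)).2 =
    (solPair ρ l x n).2 + l * (1 / ρ (n + 1) + 1 / ρ n) * (solPair ρ l x n).1 := rfl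

lemma sol_fst (x : ℝ) (n : ℕ) : (solPair ρ l x (n + 1)).1 =
    (solPair ρ l x n).1 + ρ (n + 1) * (solPair ρ l x (n + 1)).2 := rfl

lemma sol_nonneg (hρ : ∀ n, 0 < ρ n) (hl : 0 ≤ l) (x : ℝ) (hx : 0 ≤ x) (n : ℕ) :
    1 ≤ (solPair ρ l x n).1 ∧ x ≤ (solPair ρ l x n).2 := by
  induction n with
  | zero => simp [solPair]
  | succ n ih =>
    obtain ⟨h1, h2⟩ := ih
    have p1 := hρ n
    have p2 := hρ (n + 1)
    have h3 : x ≤ (solPair ρ l x (n + 1)).2 := by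
      rw [sol_snd]
      have : 0 ≤ l * (1 / ρ (n + 1) + 1 / ρ n) * (solPair ρ l x n).1 := by positivity
      linarith
    refine ⟨?_, h3⟩
    rw [sol_fst]
    have : 0 ≤ ρ (n + 1) * (solPair ρ l x (n + 1)).2 := mul_nonneg p2.le (hx.trans h3)
    linarith

lemma sol_wronsk (n : ℕ) :
    (solPair ρ l 0 n).1 * (solPair ρ l 1 n).2 - (solPair ρ l 0 n).2 * (solPair ρ l 1 n).1 = 1 := by
  induction n with
  | zero => simp [solPair]
  | succ n ih => simp only [sol_fst, sol_snd]; linear_combination ih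

lemma sol_ratio (hρ : ∀ n, 0 < ρ n) (hl : 0 ≤ l) (n : ℕ) :
    (solPair ρ l 0 n).1 / (solPair ρ l 1 n).1 - (solPair ρ l 0 (n + 1)).1 / (solPair ρ l 1 (n + 1)).1
      = ρ (n + 1) / ((solPair ρ l 1 (n + 1)).1 * (solPair ρ l 1 n).1) := by
  have b1 : 0 < (solPair ρ l 1 n).1 := by linarith [(sol_nonneg ρ l hρ hl 1 zero_le_one n).1]
  have b2 : 0 < (solPair ρ l 1 (n + 1)).1 := by
    linarith [(sol_nonneg ρ l hρ hl 1 zero_le_one (n + 1)).1]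
  have W := sol_wronsk ρ l n
  rw [div_sub_div _ _ b1.ne' b2.ne', mul_comm (solPair ρ l 1 n).1 (solPair ρ l 1 (n + 1)).1]
  congr 1
  simp only [sol_fst, sol_snd]; linear_combination ρ (n + 1) * W

lemma sol_ratio_anti (hρ : ∀ n, 0 < ρ n) (hl : 0 ≤ l) :
    Antitone fun n => (solPair ρ l 0 n).1 / (solPair ρ l 1 n).1 := by
  apply antitone_nat_of_succ_le
  intro n
  have := sol_ratio ρ l hρ hl n
  have b1 : 0 < (solPair ρ l 1 n).1 := by linarith [(sol_nonneg ρ l hρ hl 1 zero_le_one n).1]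
  have b2 : 0 < (solPair ρ l 1 (n + 1)).1 := by
    linarith [(sol_nonneg ρ l hρ hl 1 zero_le_one (n + 1)).1]
  have p2 := hρ (n + 1)
  have : 0 ≤ ρ (n + 1) / ((solPair ρ l 1 (n + 1)).1 * (solPair ρ l 1 n).1) := by positivity
  linarith

lemma sol_sum (hρ : ∀ n, 0 < ρ n) (hl : 0 ≤ l) (N : ℕ) :
    ∑ n ∈ Finset.range N, ρ (n + 1) / ((solPair ρ l 1 (n + 1)).1 * (solPair ρ l 1 n).1)
      = 1 - (solPair ρ l 0 N).1 / (solPair ρ l 1 N).1 := by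
  induction N with
  | zero => simp [solPair]
  | succ n ih => rw [Finset.sum_range_succ, ih, ← sol_ratio ρ l hρ hl n]; ring

lemma sol_beta_ge (hρ : ∀ n, 0 < ρ n) (hl : 0 ≤ l) (h0 : ρ 0 = 1) (N : ℕ) :
    ∑ k ∈ Finset.range (N + 1), ρ k ≤ (solPair ρ l 1 N).1 := by
  induction N with
  | zero => simp [solPair, h0]
  | succ n ih =>
    rw [Finset.sum_range_succ, sol_fst]
    have := (sol_nonneg ρ l hρ hl 1 zero_le_one (n + 1)).2
    have := hρ (n + 1)
    nlinarith

lemma sol_x_le (hρ : ∀ n, 0 < ρ n) (hl : 0 ≤ l) (n : ℕ) :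
    (solPair ρ l 0 n).2 + l * (1 / ρ n) * (solPair ρ l 0 n).1
      ≤ 2 * l * (∑ k ∈ Finset.range (n + 1), 1 / ρ k) * (solPair ρ l 0 n).1 ∧
    (solPair ρ l 0 (n + 1)).2
      ≤ 2 * l * (∑ k ∈ Finset.range (n + 2), 1 / ρ k) * (solPair ρ l 0 n).1 := by
  have key : ∀ n, (solPair ρ l 0 n).2 + l * (1 / ρ n) * (solPair ρ l 0 n).1
      ≤ 2 * l * (∑ k ∈ Finset.range (n + 1), 1 / ρ k) * (solPair ρ l 0 n).1 →
      (solPair ρ l 0 (n + 1)).2 + l * (1 / ρ (n + 1)) * (solPair ρ l 0 n).1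
      ≤ 2 * l * (∑ k ∈ Finset.range (n + 2), 1 / ρ k) * (solPair ρ l 0 n).1 := by
    intro n h
    rw [sol_snd, Finset.sum_range_succ _ (n + 1)]
    nlinarith
  have first : ∀ n, (solPair ρ l 0 n).2 + l * (1 / ρ n) * (solPair ρ l 0 n).1
      ≤ 2 * l * (∑ k ∈ Finset.range (n + 1), 1 / ρ k) * (solPair ρ l 0 n).1 := by
    intro n
    induction n with
    | zero =>
      have := hρ 0
      have : 0 ≤ l * (1 / ρ 0) := by positivity
      simp [solPair] at this ⊢
      linarith
    | succ n ih =>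
      have h := key n ih
      have hx := (sol_nonneg ρ l hρ hl 0 le_rfl (n + 1)).2
      have p2 := hρ (n + 1)
      have hd : 0 ≤ (solPair ρ l 0 (n + 1)).1 - (solPair ρ l 0 n).1 := by
        rw [sol_fst]; have := mul_nonneg p2.le hx; linarith
      have hS : 1 / ρ (n + 1) ≤ ∑ k ∈ Finset.range (n + 2), 1 / ρ k :=
        Finset.single_le_sum (f := fun k => 1 / ρ k)
          (fun k _ => by have := hρ k; positivity) (by simp)
      have hpos : 0 ≤ 1 / ρ (n + 1) := by positivity
      have := mul_nonneg hl hd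
      have h5 : 0 ≤ 2 * (∑ k ∈ Finset.range (n + 2), 1 / ρ k) - 1 / ρ (n + 1) := by linarith
      have := mul_nonneg this h5
      show _ ≤ 2 * l * (∑ k ∈ Finset.range (n + 2), 1 / ρ k) * _
      nlinarith
  refine ⟨first n, ?_⟩
  have := key n (first n)
  have u := (sol_nonneg ρ l hρ hl 0 le_rfl n).1
  have p2 := hρ (n + 1)
  have : 0 ≤ l * (1 / ρ (n + 1)) * (solPair ρ l 0 n).1 := by positivity
  linarith

lemma sol_u_le (hρ : ∀ n, 0 < ρ n) (hl : 0 ≤ l) (N : ℕ) :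
    (solPair ρ l 0 N).1 ≤ Real.exp (2 * l * (∑ k ∈ Finset.range (N + 1), 1 / ρ k) *
      ∑ k ∈ Finset.range (N + 1), ρ k) := by
  set w := ∑ k ∈ Finset.range (N + 1), 1 / ρ k with hw
  have hw0 : 0 ≤ w := Finset.sum_nonneg fun k _ => by have := hρ k; positivity
  have : ∀ n ≤ N, (solPair ρ l 0 n).1 ≤ Real.exp (2 * l * w * ∑ k ∈ Finset.range (n + 1), ρ k) := by
    intro n
    induction n with
    | zero =>
      intro _
      have := hρ 0
      have : 0 ≤ 2 * l * w * ρ 0 := by positivity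
      simpa [solPair] using this
    | succ n ih =>
      intro hn
      have ih := ih (by omega)
      have u := (sol_nonneg ρ l hρ hl 0 le_rfl n).1
      have hx := (sol_x_le ρ l hρ hl n).2
      have hmono : ∑ k ∈ Finset.range (n + 2), 1 / ρ k ≤ w :=
        Finset.sum_le_sum_of_subset_of_nonneg (Finset.range_mono (by omega))
          (fun k _ _ => by have := hρ k; positivity)
      have hx2 : (solPair ρ l 0 (n + 1)).2 ≤ 2 * l * w * (solPair ρ l 0 n).1 :=
        hx.trans (by gcongr)
      have p2 := hρ (n + 1)
      rw [sol_fst, Finset.sum_range_succ, mul_add, Real.exp_add]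
      calc _ ≤ (solPair ρ l 0 n).1 + ρ (n + 1) * (2 * l * w * (solPair ρ l 0 n).1) := by gcongr
        _ = (solPair ρ l 0 n).1 * (2 * l * w * ρ (n + 1) + 1) := by ring
        _ ≤ _ := by
          gcongr
          exact Real.add_one_le_exp _
  exact this N le_rfl

lemma sol_lower (hρ : ∀ n, 0 < ρ n) (hl : 0 ≤ l) (h0 : ρ 0 = 1) (N M : ℕ) (hM : N + 1 ≤ M) :
    l * (∑ k ∈ Finset.range (N + 1), 1 / ρ k) ≤
    (solPair ρ l 0 M).1 / (solPair ρ l 1 M).1 *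
      (1 + l * (∑ k ∈ Finset.range (N + 1), 1 / ρ k) * ∑ k ∈ Finset.range (N + 1), ρ k) := by
  set r := (solPair ρ l 0 M).1 / (solPair ρ l 1 M).1 with hr
  have hb : ∀ n, 0 < (solPair ρ l 1 n).1 := fun n => by
    linarith [(sol_nonneg ρ l hρ hl 1 zero_le_one n).1]
  obtain ⟨P, hP⟩ : ∃ P : ℕ → ℝ, ∀ n, P n = (solPair ρ l 0 n).1 - r * (solPair ρ l 1 n).1 :=
    ⟨_, fun _ => rfl⟩
  obtain ⟨Q, hQ⟩ : ∃ Q : ℕ → ℝ, ∀ n, Q n = r * (solPair ρ l 1 n).2 - (solPair ρ l 0 n).2 :=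
    ⟨_, fun _ => rfl⟩
  have hPs : ∀ n, P (n + 1) = P n - ρ (n + 1) * Q (n + 1) := fun n => by
    rw [hP, hP, hQ, sol_fst, sol_fst]; ring
  have hQs : ∀ n, Q (n + 1) = Q n - l * (1 / ρ (n + 1) + 1 / ρ n) * P n := fun n => by
    rw [hP, hQ, hQ, sol_snd, sol_snd]; ring
  have hP0 : P 0 = 1 - r := by rw [hP]; simp [solPair]
  have hQ0 : Q 0 = r := by rw [hQ]; simp [solPair]
  have hPn : ∀ n ≤ M, 0 ≤ P n := fun n hn => by
    have h1 : r ≤ (solPair ρ l 0 n).1 / (solPair ρ l 1 n).1 := sol_ratio_anti ρ l hρ hl hn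
    rw [le_div_iff₀ (hb n)] at h1
    rw [hP]; linarith
  have hPM : P M = 0 := by
    rw [hP, hr, div_mul_cancel₀ _ (hb M).ne']; ring
  have hkap : ∀ n, 0 ≤ l * (1 / ρ (n + 1) + 1 / ρ n) := fun n => by
    have := hρ n; have := hρ (n + 1); positivity
  have hQM : 0 ≤ Q M := by
    obtain ⟨m, rfl⟩ : ∃ m, M = m + 1 := ⟨M - 1, by omega⟩
    have h1 := hPs m
    have h2 := hPn m (by omega)
    rw [hPM] at h1
    have p := hρ (m + 1)
    by_contra hneg
    push Not at hneg
    nlinarith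
  have hQn : ∀ j n, n + j = M → 0 ≤ Q n := by
    intro j
    induction j with
    | zero => intro n hn; have : n = M := by omega
              rw [this]; exact hQM
    | succ j ih =>
      intro n hn
      have h1 := ih (n + 1) (by omega)
      have h2 := hQs n
      have := mul_nonneg (hkap n) (hPn n (by omega))
      linarith
  have hQn' : ∀ n ≤ M, 0 ≤ Q n := fun n hn => hQn (M - n) n (by omega)
  have hQr : ∀ n ≤ M, Q n ≤ r := by
    intro n
    induction n with
    | zero => intro _; rw [hQ0]
    | succ n ih =>
      intro hn
      have := mul_nonneg (hkap n) (hPn n (by omega))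
      have := ih (by omega)
      rw [hQs]; linarith
  have hPl : ∀ n ≤ M, 1 - r * ∑ k ∈ Finset.range (n + 1), ρ k ≤ P n := by
    intro n
    induction n with
    | zero => intro _; rw [hP0]; simp [h0]
    | succ n ih =>
      intro hn
      have h1 := ih (by omega)
      have h2 := mul_le_mul_of_nonneg_left (hQr (n + 1) hn) (hρ (n + 1)).le
      rw [hPs, Finset.sum_range_succ]; nlinarith
  have hPa : ∀ n, n + 1 ≤ M → P (n + 1) ≤ P n := fun n hn => by
    have := mul_nonneg (hρ (n + 1)).le (hQn' (n + 1) hn)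
    rw [hPs]; linarith
  have hQu : ∀ n, n + 1 ≤ M → Q (n + 1) ≤ r - l * (∑ k ∈ Finset.range (n + 1), 1 / ρ k) * P n := by
    intro n
    induction n with
    | zero =>
      intro hn
      have h1 : 0 ≤ l * (1 / ρ 1) * P 0 := by
        have := hρ 1; have := hPn 0 (by omega); positivity
      rw [hQs, hQ0]; simp only [zero_add, Finset.sum_range_one]
      nlinarith
    | succ n ih =>
      intro hn
      have h1 := ih (by omega)
      have h2 : 0 ≤ l * (1 / ρ (n + 2)) * P (n + 1) := by
        have := hρ (n + 2); have := hPn (n + 1) (by omega); positivity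
      have h3 : 0 ≤ l * (∑ k ∈ Finset.range (n + 1), 1 / ρ k) * (P n - P (n + 1)) := by
        have := hPa n (by omega)
        have : 0 ≤ ∑ k ∈ Finset.range (n + 1), 1 / ρ k :=
          Finset.sum_nonneg fun k _ => by have := hρ k; positivity
        apply mul_nonneg (mul_nonneg hl this); linarith
      rw [hQs, Finset.sum_range_succ _ (n + 1)]
      nlinarith
  have h1 := hQu N hM
  have h2 := hQn' (N + 1) hM
  have h3 := hPl N (by omega)
  have hw0 : 0 ≤ l * ∑ k ∈ Finset.range (N + 1), 1 / ρ k :=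
    mul_nonneg hl (Finset.sum_nonneg fun k _ => by have := hρ k; positivity)
  have := mul_le_mul_of_nonneg_left h3 hw0
  nlinarith

lemma sol_tsum (hρ : ∀ n, 0 < ρ n) (hl : 0 ≤ l) :
    Filter.Tendsto (fun N => (solPair ρ l 0 N).1 / (solPair ρ l 1 N).1) Filter.atTop
      (nhds (1 - ∑' n, ρ (n + 1) / ((solPair ρ l 1 (n + 1)).1 * (solPair ρ l 1 n).1))) := by
  have hb : ∀ x, 0 ≤ x → ∀ n, 0 < (solPair ρ l x n).1 := fun x hx n => by
    linarith [(sol_nonneg ρ l hρ hl x hx n).1]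
  have hs : Summable fun n => ρ (n + 1) / ((solPair ρ l 1 (n + 1)).1 * (solPair ρ l 1 n).1) := by
    apply summable_of_sum_range_le (c := 1)
    · intro n
      have := hρ (n + 1); have := hb 1 zero_le_one n; have := hb 1 zero_le_one (n + 1)
      positivity
    · intro n
      rw [sol_sum ρ l hρ hl]
      have := div_pos (hb 0 le_rfl n) (hb 1 zero_le_one n)
      linarith
  have := hs.hasSum.tendsto_sum_nat.const_sub 1
  simpa [sol_sum ρ l hρ hl] using this

end core

lemma invN_spec (f : ℕ → ℝ) (x : ℝ) (h0 : f 0 ≤ x) (K : ℕ) (hK : ∀ n, f n ≤ x → n ≤ K) :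
    f (invN f x) ≤ x ∧ x < f (invN f x + 1) ∧ ∀ n, f n ≤ x → n ≤ invN f x := by
  have hbdd : BddAbove {n : ℕ | f n ≤ x} := ⟨K, fun n hn => hK n hn⟩
  have hle : ∀ n, f n ≤ x → n ≤ invN f x := fun n hn => le_csSup hbdd hn
  refine ⟨Nat.sSup_mem (s := {n : ℕ | f n ≤ x}) ⟨0, h0⟩ hbdd, ?_, hle⟩
  by_contra h
  push Not at h
  have := hle _ h
  omega

/-- The quantity `R(t) = 1 - ∑_{n≥1} ρ n / (β n(t) β (n-1)(t))`
(probabilistically `1 - 𝔼⁺((1-t²)^{σ-1})`) has exact order `1 / ψ₊⁻¹(1/t)` as `t → 0⁺`. -/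
theorem stmt_11
    (δ : ℝ) (hδ0 : 0 < δ) (hδ1 : δ < 1)
    (a : ℕ → ℝ) (ha : ∀ n : ℕ, 1 ≤ n → δ ≤ a n ∧ a n ≤ 1 / δ)
    (ρ : ℕ → ℝ) (hρ0 : ρ 0 = 1)
    (hρ : ∀ n : ℕ, 1 ≤ n → ρ n = ρ (n - 1) * a n)
    (v w : ℕ → ℝ)
    (hv : ∀ n, v n = ∑ k ∈ Finset.range (n + 1), ρ k)
    (hw : ∀ n, w n = ∑ k ∈ Finset.range (n + 1), 1 / ρ k)
    (hvlim : Filter.Tendsto v Filter.atTop Filter.atTop)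
    (ψ : ℕ → ℝ)
    (hψ0 : ∀ n, 0 ≤ ψ n) (hψ : ∀ n : ℕ, (ψ n) ^ 2 = n * w (invN v n))
    (β : ℝ → ℤ → ℝ)
    (hβm : ∀ t, β t (-1) = 0) (hβ0 : ∀ t, β t 0 = 1)
    (hβ : ∀ t : ℝ, 0 < t → t < 1 → ∀ n : ℕ, 1 ≤ n →
      β t (n : ℤ) = ((1 + a n) / (1 - t ^ 2)) * β t ((n : ℤ) - 1) - a n * β t ((n : ℤ) - 2))
    (R : ℝ → ℝ)
    (hR : ∀ t : ℝ, 0 < t → t < 1 →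
      R t = 1 - ∑' n : ℕ, ρ (n + 1) / (β t ((n : ℤ) + 1) * β t (n : ℤ))) :
    ∃ α : ℝ, 1 ≤ α ∧ ∃ t₀ : ℝ, 0 < t₀ ∧ t₀ ≤ 1 ∧ ∀ t : ℝ, 0 < t → t < t₀ →
      1 / α ≤ R t * (invN ψ (1 / t) : ℝ) ∧ R t * (invN ψ (1 / t) : ℝ) ≤ α := by
  have hρpos : ∀ n, 0 < ρ n := by
    intro n
    induction n with
    | zero => rw [hρ0]; exact one_pos
    | succ n ih =>
      rw [hρ (n + 1) (by omega)]
      exact mul_pos ih (hδ0.trans_le (ha (n + 1) (by omega)).1)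
  have hv0 : v 0 = 1 := by rw [hv]; simp [hρ0]
  have hw1 : ∀ n, 1 ≤ w n := by
    intro n
    rw [hw]
    have := Finset.single_le_sum (f := fun k => 1 / ρ k) (s := Finset.range (n + 1))
          (fun k _ => by have := hρpos k; positivity) (a := 0) (by simp)
    simpa [hρ0] using this
  have hvmono : StrictMono v := by
    apply strictMono_nat_of_lt_succ
    intro n
    rw [hv, hv, Finset.sum_range_succ _ (n + 1)]
    linarith [hρpos (n + 1)]
  have hvpos : ∀ n, 0 < v n := fun n => by
    have := hvmono.monotone (Nat.zero_le n); linarith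
  have hvs : ∀ n, v (n + 1) ≤ (1 + 1 / δ) * v n := by
    intro n
    have h1 : ρ n ≤ v n := by
      rw [hv]
      exact Finset.single_le_sum (f := ρ) (fun k _ => (hρpos k).le) (by simp)
    have h2 : ρ (n + 1) ≤ ρ n * (1 / δ) := by
      rw [hρ (n + 1) (by omega)]
      exact mul_le_mul_of_nonneg_left (ha (n + 1) (by omega)).2 (hρpos n).le
    have h3 : v (n + 1) = v n + ρ (n + 1) := by
      rw [hv, hv, Finset.sum_range_succ _ (n + 1)]
    have h4 : ρ n * (1 / δ) ≤ v n * (1 / δ) := mul_le_mul_of_nonneg_right h1 (by positivity)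
    rw [h3]; linarith
  have hvinv : ∀ m : ℕ, 1 ≤ m → v (invN v m) ≤ m ∧ (m : ℝ) < v (invN v m + 1) := by
    intro m hm
    have hm' : (1 : ℝ) ≤ m := by exact_mod_cast hm
    obtain ⟨K, hK⟩ := (hvlim.eventually_gt_atTop (m : ℝ)).exists
    have := invN_spec v m (by rw [hv0]; exact hm') K (fun n hn => by
      by_contra h
      push Not at h
      have := hvmono h
      linarith)
    exact ⟨this.1, this.2.1⟩
  have hv1 : invN v ((1 : ℕ) : ℝ) = 0 := by
    have h := (hvinv 1 le_rfl).1
    by_contra hne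
    have := hvmono (Nat.pos_of_ne_zero hne)
    rw [hv0] at this
    push_cast at h this
    linarith
  have hw0 : w 0 = 1 := by rw [hw]; simp [hρ0]
  have hC : (0 : ℝ) < 1 / δ := by positivity
  refine ⟨max 4 (Real.exp 3 * (1 + 1 / δ)), le_max_of_le_left (by norm_num), 1 / 2, by norm_num,
    by norm_num, ?_⟩
  intro t ht0 ht2
  have ht1 : t < 1 := by linarith
  have hden : 0 < 1 - t ^ 2 := by nlinarith
  set l := t ^ 2 / (1 - t ^ 2) with hl
  have hl0 : 0 ≤ l := by positivity
  have hl1 : 1 + l = 1 / (1 - t ^ 2) := by rw [hl]; field_simp; ring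
  -- identification of β
  have hβB : ∀ n : ℕ, β t (n : ℤ) = (solPair ρ l 1 n).1 ∧
      β t ((n : ℤ) - 1) = (solPair ρ l 1 n).1 - ρ n * (solPair ρ l 1 n).2 := by
    intro n
    induction n with
    | zero => simp [solPair, hβ0, hβm, hρ0]
    | succ n ih =>
      obtain ⟨i1, i2⟩ := ih
      have e1 : (((n + 1 : ℕ) : ℤ)) - 1 = n := by push_cast; ring
      have e2 : (((n + 1 : ℕ) : ℤ)) - 2 = n - 1 := by push_cast; ring
      have p1 := hρpos n
      have p2 := hρpos (n + 1)
      have ea := hρ (n + 1) (by omega)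
      simp only [Nat.add_sub_cancel] at ea
      constructor
      · rw [hβ t ht0 ht1 (n + 1) (by omega), e1, e2, i1, i2, div_eq_mul_one_div, ← hl1,
          sol_fst, sol_snd]
        have e3 : ρ (n + 1) * (1 / ρ (n + 1) + 1 / ρ n) = 1 + a (n + 1) := by
          rw [mul_add, mul_one_div_cancel p2.ne', ea]; field_simp
        linear_combination (-l * (solPair ρ l 1 n).1) * e3 - (solPair ρ l 1 n).2 * ea
      · rw [e1, i1, sol_fst]; ring
  have hβB1 : ∀ n : ℕ, β t ((n : ℤ) + 1) = (solPair ρ l 1 (n + 1)).1 := fun n => by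
    have := (hβB (n + 1)).1
    push_cast at this
    exact this
  have hRlim := sol_tsum ρ l hρpos hl0
  have hRt : R t = 1 - ∑' n, ρ (n + 1) / ((solPair ρ l 1 (n + 1)).1 * (solPair ρ l 1 n).1) := by
    rw [hR t ht0 ht1]
    simp only [hβB1, (hβB _).1]
  rw [← hRt] at hRlim
  have hRle : ∀ N, R t ≤ (solPair ρ l 0 N).1 / (solPair ρ l 1 N).1 := fun N =>
    (sol_ratio_anti ρ l hρpos hl0).le_of_tendsto hRlim N
  have hRge : ∀ N, l * w N ≤ R t * (1 + l * w N * v N) := fun N => by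
    refine ge_of_tendsto (hRlim.mul_const (1 + l * w N * v N)) ?_
    filter_upwards [Filter.eventually_ge_atTop (N + 1)] with M hM
    rw [hw, hv]
    exact sol_lower ρ l hρpos hl0 hρ0 N M hM
  -- the inverse of ψ
  have hψiff : ∀ n, ψ n ≤ 1 / t ↔ n * w (invN v n) ≤ 1 / t ^ 2 := fun n => by
    rw [← hψ, ← one_div_pow]
    exact (pow_le_pow_iff_left₀ (hψ0 n) (by positivity) two_ne_zero).symm
  obtain ⟨K, hK⟩ := exists_nat_ge (1 / t ^ 2)
  have hspec := invN_spec ψ (1 / t) (by rw [hψiff]; simp; positivity) K (fun n hn => by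
    rw [hψiff] at hn
    have h1 : (n : ℝ) * 1 ≤ n * w (invN v n) := by gcongr; exact hw1 _
    have : (n : ℝ) ≤ K := by linarith
    exact_mod_cast this)
  set m := invN ψ (1 / t) with hm
  obtain ⟨s1, s2, s3⟩ := hspec
  have hm1 : 1 ≤ m := by
    apply s3
    rw [hψiff, hv1, hw0, le_div_iff₀ (by positivity)]
    push_cast; nlinarith
  have hm1' : (1 : ℝ) ≤ m := by exact_mod_cast hm1
  rw [hψiff] at s1
  rw [← not_le, hψiff, not_le] at s2
  have hlt : l ≤ 4 / 3 * t ^ 2 := by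
    have hq : t ^ 2 ≤ 1 / 4 := by nlinarith
    rw [hl, div_le_iff₀ hden]; nlinarith [sq_nonneg t]
  have hlt2 : t ^ 2 ≤ l := by
    rw [hl, le_div_iff₀ hden]; nlinarith [sq_nonneg t]
  have htt : t ^ 2 * (1 / t ^ 2) = 1 := by field_simp
  constructor
  · have hlow : 1 / 4 ≤ R t * m := by
      obtain ⟨n1, n2⟩ := hvinv (m + 1) (by omega)
      have hg := hRge (invN v ((m + 1 : ℕ) : ℝ))
      set N := invN v ((m + 1 : ℕ) : ℝ) with hN
      have hwN := hw1 N
      have hX : 1 < l * (((m + 1 : ℕ) : ℝ) * w N) := by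
        calc 1 = t ^ 2 * (1 / t ^ 2) := htt.symm
          _ < t ^ 2 * (((m + 1 : ℕ) : ℝ) * w N) := by gcongr
          _ ≤ _ := by gcongr
      push_cast at hX n1
      have hlw : 0 ≤ l * w N := by positivity
      have hvN := hvpos N
      have hR0 : 0 ≤ R t := by
        by_contra h
        push Not at h
        have : 0 < 1 + l * w N * v N := by positivity
        nlinarith
      have h1 : l * w N * v N ≤ l * w N * (m + 1) := by gcongr
      have h2 : l * w N ≤ R t * (1 + l * w N * (m + 1)) := hg.trans (by gcongr)
      have h3 : R t * (1 + l * w N * (m + 1)) ≤ R t * (2 * (l * w N * (m + 1))) := by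
        gcongr; linarith
      have hlw' : 0 < l * w N := by
        have : 0 < l * w N * (m + 1) := by linarith
        exact pos_of_mul_pos_left this (by positivity)
      have h4 : l * w N * 1 ≤ l * w N * (R t * (2 * (m + 1))) := by linarith
      have h5 := le_of_mul_le_mul_left h4 hlw'
      nlinarith
    refine le_trans ?_ hlow
    exact one_div_le_one_div_of_le (by norm_num) (le_max_left _ _)
  · refine le_trans ?_ (le_max_right _ _)
    obtain ⟨n1, n2⟩ := hvinv m hm1
    set N := invN v (m : ℝ) with hN
    have hwN := hw1 N
    have hvN := hvpos N
    have h1 : l * w N * v N ≤ 4 / 3 := by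
      calc l * w N * v N ≤ (4 / 3 * t ^ 2) * w N * m := by gcongr
        _ = 4 / 3 * (t ^ 2 * (m * w N)) := by ring
        _ ≤ 4 / 3 * (t ^ 2 * (1 / t ^ 2)) := by gcongr
        _ = 4 / 3 := by rw [htt, mul_one]
    have h2 : (solPair ρ l 0 N).1 ≤ Real.exp 3 := by
      refine (sol_u_le ρ l hρpos hl0 N).trans ?_
      rw [← hw, ← hv]
      apply Real.exp_le_exp.mpr
      linarith
    have h3 : v N ≤ (solPair ρ l 1 N).1 := by
      rw [hv]; exact sol_beta_ge ρ l hρpos hl0 hρ0 N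
    have h4 : R t ≤ Real.exp 3 / v N := (hRle N).trans (by gcongr)
    have h5 : (m : ℝ) ≤ (1 + 1 / δ) * v N := n2.le.trans (hvs N)
    calc R t * m ≤ Real.exp 3 / v N * m := by gcongr
      _ ≤ Real.exp 3 / v N * ((1 + 1 / δ) * v N) := by gcongr
      _ = _ := by field_simp
end

section
/- For every $n\ge0$ and every real $t$: $B_n-A_n=\sum_{r=0}^n(-it)^r\,\Delta_r^n$ and $B_n=\sum_{r=0}^n(-it)^r\sum_{0\le k\le n}\rho_k\,\theta^k\Delta_r^{n-k}$. -/
open scoped Classical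

/-- `ρ 0 = 1`, `ρ n = a 1 ⋯ a n`. -/
noncomputable def rho (a : ℕ → ℝ) (n : ℕ) : ℝ := ∏ k ∈ Finset.Icc 1 n, a k

/-- `R_k^l = ∑_{s=k}^l η s · ρ l / ρ s`. -/
noncomputable def Rkl (a η : ℕ → ℝ) (k l : ℕ) : ℝ :=
  ∑ s ∈ Finset.Icc k l, η s * (rho a l / rho a s)

/-- `T_k^l = (R_k^l)² ρ (k-1) / ρ l`. -/
noncomputable def Tkl (a η : ℕ → ℝ) (k l : ℕ) : ℝ :=
  (Rkl a η k l) ^ 2 * (rho a (k - 1) / rho a l)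

/-- `Δ_r^n = ∑_{1 ≤ k₁ < ⋯ < k_r ≤ n} R_1^{k₁} R_{k₁+1}^{k₂} ⋯ R_{k_{r-1}+1}^{k_r}`
(`Δ_0^n = 1`, and `Δ_r^n = 0` for `r > n`). -/
noncomputable def Delta (a η : ℕ → ℝ) (r n : ℕ) : ℝ :=
  ∑ k ∈ (Fintype.piFinset fun _ : Fin r => Finset.Icc 1 n).filter
      (fun k => ∀ i j : Fin r, i < j → k i < k j),
    ∏ i : Fin r, Rkl a η (if (i : ℕ) = 0 then 1 else k ⟨(i : ℕ) - 1, Nat.lt_of_le_of_lt (Nat.sub_le _ _) i.isLt⟩ + 1) (k i)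

/-- `K_r(n) = ∑_{p=-r}^r (-1)^p Δ_{r+p}^n Δ_{r-p}^n`. -/
noncomputable def Kr (a η : ℕ → ℝ) (r n : ℕ) : ℝ :=
  ∑ p ∈ Finset.Icc (-(r : ℤ)) (r : ℤ),
    (-1 : ℝ) ^ p * Delta a η ((r : ℤ) + p).toNat n * Delta a η ((r : ℤ) - p).toNat n

/-- Shift of the data: `θ^j` replaces `(a k, η k)` by `(a (k+j), η (k+j))`. -/
def shift (f : ℕ → ℝ) (j : ℕ) : ℕ → ℝ := fun k => f (k + j)

/-- last entry of a tuple, `0` for the empty tuple -/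
def lastE : (r : ℕ) → (Fin r → ℕ) → ℕ
  | 0, _ => 0
  | _ + 1, k => k (Fin.last _)

noncomputable def tupS (r n : ℕ) : Finset (Fin r → ℕ) :=
  (Fintype.piFinset fun _ : Fin r => Finset.Icc 1 n).filter
      (fun k => ∀ i j : Fin r, i < j → k i < k j)

noncomputable def prodP (a η : ℕ → ℝ) (r : ℕ) (k : Fin r → ℕ) : ℝ :=
    ∏ i : Fin r, Rkl a η (if (i : ℕ) = 0 then 1 else k ⟨(i : ℕ) - 1, Nat.lt_of_le_of_lt (Nat.sub_le _ _) i.isLt⟩ + 1) (k i)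

noncomputable def W (a η : ℕ → ℝ) : ℕ → ℕ → ℝ
  | 0, m => if m = 0 then 1 else 0
  | r + 1, m => ∑ j ∈ Finset.range m, W a η r j * Rkl a η (j + 1) m

theorem Delta_eq (a η : ℕ → ℝ) (r n : ℕ) : Delta a η r n = ∑ k ∈ tupS r n, prodP a η r k := rfl

theorem mem_tupS (r n : ℕ) (k : Fin r → ℕ) :
    k ∈ tupS r n ↔ (∀ i, 1 ≤ k i ∧ k i ≤ n) ∧ ∀ i j : Fin r, i < j → k i < k j := by
  simp [tupS, Fintype.mem_piFinset]

theorem prodP_snoc (a η : ℕ → ℝ) (r : ℕ) (k : Fin r → ℕ) (m : ℕ) :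
    prodP a η (r + 1) (Fin.snoc k m : Fin (r+1) → ℕ) = prodP a η r k * Rkl a η (lastE r k + 1) m := by
  unfold prodP
  rw [Fin.prod_univ_castSucc]
  congr 1
  · apply Finset.prod_congr rfl
    intro i _
    have h2 : (Fin.snoc k m : Fin (r+1) → ℕ) (⟨(i : ℕ) - 1, by omega⟩) = k ⟨(i : ℕ) - 1, by omega⟩ := by
      exact Fin.snoc_castSucc (α := fun _ => ℕ) m k ⟨(i : ℕ) - 1, by omega⟩
    simp only [Fin.snoc_castSucc, Fin.val_castSucc, h2]
  · cases r with
    | zero => simp [lastE, Fin.snoc]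
    | succ r =>
      have h2 : (Fin.snoc k m : Fin (r+1+1) → ℕ) (⟨r, by omega⟩) = k (Fin.last r) := by
        exact Fin.snoc_castSucc (α := fun _ => ℕ) m k (Fin.last r)
      simp [lastE, h2]

theorem sum_tup (a η : ℕ → ℝ) (r : ℕ) : ∀ (n : ℕ) (f : ℕ → ℝ),
    ∑ k ∈ tupS r n, prodP a η r k * f (lastE r k) = ∑ m ∈ Finset.range (n + 1), W a η r m * f m := by
  induction r with
  | zero =>
    intro n f
    have : tupS 0 n = Finset.univ := by ext k; simp only [mem_tupS, Finset.mem_univ, iff_true]; exact ⟨fun i => i.elim0, fun i => i.elim0⟩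
    rw [this]
    simp [prodP, lastE, W]
  | succ r ih =>
    intro n f
    have key : ∑ k ∈ tupS (r+1) n, prodP a η (r+1) k * f (lastE (r+1) k)
        = ∑ x ∈ (Finset.range n).sigma (fun m => tupS r m),
          prodP a η r x.2 * Rkl a η (lastE r x.2 + 1) (x.1 + 1) * f (x.1 + 1) := by
      symm
      refine Finset.sum_bij' (fun x _ => (Fin.snoc x.2 (x.1 + 1) : Fin (r+1) → ℕ))
        (fun k _ => ⟨k (Fin.last r) - 1, fun i => k i.castSucc⟩) ?_ ?_ ?_ ?_ ?_
      · rintro ⟨m, k⟩ h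
        simp only [Finset.mem_sigma, Finset.mem_range, mem_tupS] at h ⊢
        obtain ⟨hm, h1, h2⟩ := h
        constructor
        · intro i
          refine Fin.lastCases ?_ (fun i => ?_) i
          · simp; omega
          · have := h1 i
            simp; omega
        · intro i j
          refine Fin.lastCases ?_ (fun j => ?_) j
          · refine Fin.lastCases ?_ (fun i => ?_) i
            · simp
            · have := h1 i
              simp; omega
          · refine Fin.lastCases ?_ (fun i => ?_) i
            · intro h
              exact absurd h (not_lt.mpr (Fin.le_last _))
            · intro h
              simpa using h2 i j (by simpa using h)
      · intro k h
        simp only [Finset.mem_sigma, Finset.mem_range, mem_tupS] at h ⊢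
        obtain ⟨h1, h2⟩ := h
        refine ⟨by have := h1 (Fin.last r); omega, fun i => ⟨(h1 _).1, ?_⟩, fun i j hij => h2 _ _ (by simpa using hij)⟩
        have := h2 i.castSucc (Fin.last r) (Fin.castSucc_lt_last i)
        omega
      · rintro ⟨m, k⟩ h
        simp
      · intro k h
        rw [mem_tupS] at h
        have h3 := (h.1 (Fin.last r)).1
        ext i
        refine Fin.lastCases ?_ (fun i => ?_) i
        · simp; omega
        · simp
      · rintro ⟨m, k⟩ h
        simp only [prodP_snoc]
        simp [lastE]
    rw [key, Finset.sum_sigma, Finset.sum_range_succ' _ n]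
    simp only [W, Finset.range_zero, Finset.sum_empty, zero_mul, add_zero]
    apply Finset.sum_congr rfl
    intro m _
    rw [← Finset.sum_mul, ih m (fun j => Rkl a η (j + 1) (m + 1))]

theorem Delta_W (a η : ℕ → ℝ) (r n : ℕ) :
    Delta a η r n = ∑ m ∈ Finset.range (n + 1), W a η r m := by
  rw [Delta_eq]
  simpa using sum_tup a η r n (fun _ => 1)

theorem W_zero (a η : ℕ → ℝ) (r : ℕ) : ∀ m, m < r → W a η r m = 0 := by
  induction r with
  | zero => intro m h; omega
  | succ r ih =>
    intro m h
    rw [W]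
    apply Finset.sum_eq_zero
    intro j hj
    rw [Finset.mem_range] at hj
    rw [ih j (by omega), zero_mul]

theorem Delta_zero (a η : ℕ → ℝ) (r n : ℕ) (h : n < r) : Delta a η r n = 0 := by
  rw [Delta_W]
  apply Finset.sum_eq_zero
  intro j hj
  rw [Finset.mem_range] at hj
  exact W_zero a η r j (by omega)

theorem Delta_0 (a η : ℕ → ℝ) (n : ℕ) : Delta a η 0 n = 1 := by
  rw [Delta_W, Finset.sum_range_succ']; simp [W]

theorem rho_succ (a : ℕ → ℝ) (n : ℕ) : rho a (n + 1) = rho a n * a (n + 1) := by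
  unfold rho
  rw [Finset.prod_Icc_succ_top (by omega)]

theorem rho_ne (a : ℕ → ℝ) (ha : ∀ k : ℕ, 1 ≤ k → 0 < a k) (n : ℕ) : rho a n ≠ 0 := by
  unfold rho
  apply Finset.prod_ne_zero_iff.mpr
  intro k hk
  exact (ha k (Finset.mem_Icc.mp hk).1).ne'

theorem R_succ (a η : ℕ → ℝ) (ha : ∀ k : ℕ, 1 ≤ k → 0 < a k) (k n : ℕ) (h : k ≤ n + 1) :
    Rkl a η k (n + 1) = a (n + 1) * Rkl a η k n + η (n + 1) := by
  unfold Rkl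
  rw [Finset.sum_Icc_succ_top h, div_self (rho_ne a ha _), Finset.mul_sum, mul_one, rho_succ]
  congr 1
  apply Finset.sum_congr rfl
  intro s _
  ring

theorem W_succ (a η : ℕ → ℝ) (ha : ∀ k : ℕ, 1 ≤ k → 0 < a k) (r m : ℕ) :
    W a η (r + 1) (m + 1) = a (m + 1) * W a η (r + 1) m + η (m + 1) * Delta a η r m := by
  rw [Delta_W, W, W]
  have : ∑ j ∈ Finset.range m, W a η r j * Rkl a η (j + 1) m
      = ∑ j ∈ Finset.range (m + 1), W a η r j * Rkl a η (j + 1) m := by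
    rw [Finset.sum_range_succ]
    simp [Rkl]
  rw [this, Finset.mul_sum, Finset.mul_sum, ← Finset.sum_add_distrib]
  apply Finset.sum_congr rfl
  intro j hj
  rw [Finset.mem_range] at hj
  rw [R_succ a η ha _ _ (by omega)]
  ring

theorem Delta_succ (a η : ℕ → ℝ) (r n : ℕ) :
    Delta a η r (n + 1) = Delta a η r n + W a η r (n + 1) := by
  rw [Delta_W, Delta_W, Finset.sum_range_succ]

theorem Delta_rec (a η : ℕ → ℝ) (ha : ∀ k : ℕ, 1 ≤ k → 0 < a k) (r n : ℕ) :
    Delta a η (r + 1) (n + 2) = (1 + a (n + 2)) * Delta a η (r + 1) (n + 1)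
      - a (n + 2) * Delta a η (r + 1) n + η (n + 2) * Delta a η r (n + 1) := by
  rw [Delta_succ a η (r + 1) (n + 1), W_succ a η ha, Delta_succ a η (r + 1) n]
  ring

noncomputable def Dg (a η : ℕ → ℝ) (z : ℂ) (n : ℕ) : ℂ :=
  ∑ r ∈ Finset.range (n + 1), z ^ r * ((Delta a η r n : ℝ) : ℂ)

theorem Dg_ext (a η : ℕ → ℝ) (z : ℂ) (n N : ℕ) (h : n + 1 ≤ N) :
    ∑ r ∈ Finset.range N, z ^ r * ((Delta a η r n : ℝ) : ℂ) = Dg a η z n := by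
  unfold Dg
  symm
  apply Finset.sum_subset
  · intro x; simp only [Finset.mem_range]; omega
  · intro x _ hx
    rw [Finset.mem_range] at hx
    rw [Delta_zero a η x n (by omega)]
    simp

theorem Dg_ext' (a η : ℕ → ℝ) (z : ℂ) (n N : ℕ) (h : n ≤ N) :
    Dg a η z n = ∑ r ∈ Finset.range N, z ^ (r + 1) * ((Delta a η (r + 1) n : ℝ) : ℂ) + 1 := by
  rw [← Dg_ext a η z n (N + 1) (by omega), Finset.sum_range_succ', Delta_0]
  simp

theorem Dg_zero (a η : ℕ → ℝ) (z : ℂ) : Dg a η z 0 = 1 := by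
  rw [Dg_ext' a η z 0 0 le_rfl]; simp

theorem Dg_one (a η : ℕ → ℝ) (ha : ∀ k : ℕ, 1 ≤ k → 0 < a k) (z : ℂ) :
    Dg a η z 1 = 1 + z * (η 1 : ℂ) := by
  rw [Dg_ext' a η z 1 1 le_rfl]
  have : Delta a η 1 1 = η 1 := by
    have h := Delta_succ a η 1 0
    have h2 := W_succ a η ha 0 0
    have h3 := Delta_zero a η 1 0 (by omega)
    have h4 := W_zero a η 1 0 (by omega)
    rw [Delta_0] at h2
    simp only [zero_add] at *
    rw [h, h2, h3, h4]; ring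
  simp [this]; ring

theorem Dg_rec (a η : ℕ → ℝ) (ha : ∀ k : ℕ, 1 ≤ k → 0 < a k) (z : ℂ) (n : ℕ) :
    Dg a η z (n + 2) = (1 + (a (n + 2) : ℂ) + z * (η (n + 2) : ℂ)) * Dg a η z (n + 1)
      - (a (n + 2) : ℂ) * Dg a η z n := by
  have e : (1 + (a (n + 2) : ℂ) + z * (η (n + 2) : ℂ)) * Dg a η z (n + 1)
    = (1 + (a (n + 2) : ℂ)) * Dg a η z (n + 1) + z * (η (n + 2) : ℂ) *
      ∑ r ∈ Finset.range (n + 2), z ^ r * ((Delta a η r (n + 1) : ℝ) : ℂ) := by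
    rw [Dg_ext a η z (n + 1) (n + 2) (by omega)]; ring
  rw [e, Dg_ext' a η z (n + 2) (n + 2) (by omega), Dg_ext' a η z (n + 1) (n + 2) (by omega),
    Dg_ext' a η z n (n + 2) (by omega), mul_add, mul_add, Finset.mul_sum, Finset.mul_sum,
    Finset.mul_sum]
  have : ∀ r, z ^ (r + 1) * ((Delta a η (r + 1) (n + 2) : ℝ) : ℂ) =
      (1 + (a (n + 2) : ℂ)) * (z ^ (r + 1) * ((Delta a η (r + 1) (n + 1) : ℝ) : ℂ))
      - (a (n + 2) : ℂ) * (z ^ (r + 1) * ((Delta a η (r + 1) n : ℝ) : ℂ))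
      + z * (η (n + 2) : ℂ) * (z ^ r * ((Delta a η r (n + 1) : ℝ) : ℂ)) := by
    intro r
    rw [Delta_rec a η ha]
    push_cast
    ring
  rw [Finset.sum_congr rfl (fun r _ => this r), Finset.sum_add_distrib, Finset.sum_sub_distrib]
  ring

noncomputable def Cg (a η : ℕ → ℝ) (z : ℂ) (n : ℕ) : ℂ :=
  ∑ k ∈ Finset.range (n + 1), (rho a k : ℂ) * Dg (shift a k) (shift η k) z (n - k)

theorem shift_pos (a : ℕ → ℝ) (ha : ∀ k : ℕ, 1 ≤ k → 0 < a k) (j : ℕ) :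
    ∀ k : ℕ, 1 ≤ k → 0 < shift a j k := fun k hk => ha _ (by omega)

theorem Cg_rec (a η : ℕ → ℝ) (ha : ∀ k : ℕ, 1 ≤ k → 0 < a k) (z : ℂ) (n : ℕ) :
    Cg a η z (n + 2) = (1 + (a (n + 2) : ℂ) + z * (η (n + 2) : ℂ)) * Cg a η z (n + 1)
      - (a (n + 2) : ℂ) * Cg a η z n := by
  have hmain : ∑ k ∈ Finset.range (n + 1), (rho a k : ℂ) * Dg (shift a k) (shift η k) z (n + 2 - k)
     = (1 + (a (n + 2) : ℂ) + z * (η (n + 2) : ℂ)) *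
        ∑ k ∈ Finset.range (n + 1), (rho a k : ℂ) * Dg (shift a k) (shift η k) z (n + 1 - k)
      - (a (n + 2) : ℂ) *
        ∑ k ∈ Finset.range (n + 1), (rho a k : ℂ) * Dg (shift a k) (shift η k) z (n - k) := by
    rw [Finset.mul_sum, Finset.mul_sum, ← Finset.sum_sub_distrib]
    apply Finset.sum_congr rfl
    intro k hk
    rw [Finset.mem_range] at hk
    obtain ⟨d, rfl⟩ : ∃ d, n = k + d := ⟨n - k, by omega⟩
    have e1 : k + d + 2 - k = d + 2 := by omega
    have e2 : k + d + 1 - k = d + 1 := by omega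
    have e3 : k + d - k = d := by omega
    rw [e1, e2, e3, Dg_rec _ _ (shift_pos a ha k)]
    have e4 : ∀ f, shift f k (d + 2) = f (k + d + 2) := by
      intro f; unfold shift; congr 1; omega
    rw [e4, e4]
    ring
  unfold Cg
  rw [Finset.sum_range_succ _ (n + 2), Finset.sum_range_succ _ (n + 1), hmain,
    Finset.sum_range_succ _ (n + 1)]
  have e1 : n + 2 - (n + 1) = 1 := by omega
  rw [e1, Nat.sub_self, Nat.sub_self, Dg_zero, Dg_zero, Dg_one _ _ (shift_pos a ha _)]
  have e4 : ∀ f, shift f (n + 1) 1 = f (n + 2) := by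
      intro f; unfold shift; congr 1; omega
  rw [e4, rho_succ a (n + 1)]
  push_cast
  ring

theorem Cg_eq (a η : ℕ → ℝ) (z : ℂ) (n : ℕ) :
    ∑ r ∈ Finset.range (n + 1), z ^ r *
          ∑ k ∈ Finset.range (n + 1),
            ((rho a k : ℝ) : ℂ) * ((Delta (shift a k) (shift η k) r (n - k) : ℝ) : ℂ)
      = Cg a η z n := by
  unfold Cg
  simp only [Finset.mul_sum]
  rw [Finset.sum_comm]
  apply Finset.sum_congr rfl
  intro k _
  rw [← Dg_ext _ _ z (n - k) (n + 1) (by omega), Finset.mul_sum]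
  apply Finset.sum_congr rfl
  intro r _
  ring

/-- Expansion of `B n - A n` and of `B n` in powers of `-it` with coefficients `Δ_r^n`. -/
theorem stmt_13
    (a η : ℕ → ℝ) (ha : ∀ k : ℕ, 1 ≤ k → 0 < a k) (t : ℝ)
    (B : ℤ → ℂ) (hBm : B (-1) = 0) (hB0 : B 0 = 1)
    (hB : ∀ n : ℕ, 1 ≤ n →
      B (n : ℤ) = (((1 + a n : ℝ) : ℂ) - Complex.I * (t : ℂ) * ((η n : ℝ) : ℂ)) * B ((n : ℤ) - 1)
        - ((a n : ℝ) : ℂ) * B ((n : ℤ) - 2))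
    (A : ℤ → ℂ) (hA0 : A 0 = 0) (hA1 : A 1 = ((a 1 : ℝ) : ℂ))
    (hA : ∀ n : ℕ, 2 ≤ n →
      A (n : ℤ) = (((1 + a n : ℝ) : ℂ) - Complex.I * (t : ℂ) * ((η n : ℝ) : ℂ)) * A ((n : ℤ) - 1)
        - ((a n : ℝ) : ℂ) * A ((n : ℤ) - 2)) :
    ∀ n : ℕ,
      B (n : ℤ) - A (n : ℤ) =
        ∑ r ∈ Finset.range (n + 1), (-(Complex.I * (t : ℂ))) ^ r * ((Delta a η r n : ℝ) : ℂ) ∧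
      B (n : ℤ) =
        ∑ r ∈ Finset.range (n + 1), (-(Complex.I * (t : ℂ))) ^ r *
          ∑ k ∈ Finset.range (n + 1),
            ((rho a k : ℝ) : ℂ) * ((Delta (shift a k) (shift η k) r (n - k) : ℝ) : ℂ) := by
  set z : ℂ := -(Complex.I * (t : ℂ)) with hz
  have hB1 : B 1 = 1 + (a 1 : ℂ) + z * (η 1 : ℂ) := by
    have h := hB 1 le_rfl
    norm_num [hB0, hBm] at h
    rw [h, hz]; ring
  have hBr : ∀ n : ℕ, B ((n + 2 : ℕ) : ℤ) = (1 + (a (n + 2) : ℂ) + z * (η (n + 2) : ℂ))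
      * B ((n + 1 : ℕ) : ℤ) - (a (n + 2) : ℂ) * B (n : ℤ) := by
    intro n
    have h := hB (n + 2) (by omega)
    have e1 : ((n + 2 : ℕ) : ℤ) - 1 = ((n + 1 : ℕ) : ℤ) := by push_cast; ring
    have e2 : ((n + 2 : ℕ) : ℤ) - 2 = (n : ℤ) := by push_cast; ring
    rw [e1, e2] at h
    rw [h, hz]; push_cast; ring
  have hAr : ∀ n : ℕ, A ((n + 2 : ℕ) : ℤ) = (1 + (a (n + 2) : ℂ) + z * (η (n + 2) : ℂ))
      * A ((n + 1 : ℕ) : ℤ) - (a (n + 2) : ℂ) * A (n : ℤ) := by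
    intro n
    have h := hA (n + 2) (by omega)
    have e1 : ((n + 2 : ℕ) : ℤ) - 1 = ((n + 1 : ℕ) : ℤ) := by push_cast; ring
    have e2 : ((n + 2 : ℕ) : ℤ) - 2 = (n : ℤ) := by push_cast; ring
    rw [e1, e2] at h
    rw [h, hz]; push_cast; ring
  have main : ∀ n : ℕ, B (n : ℤ) - A (n : ℤ) = Dg a η z n ∧ B (n : ℤ) = Cg a η z n := by
    intro n
    induction n using Nat.strong_induction_on with
    | _ n ih =>
      match n, ih with
      | 0, _ =>
        refine ⟨?_, ?_⟩
        · simp [Dg_zero, hB0, hA0]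
        · simp [Cg, Dg_zero, hB0, rho]
      | 1, _ =>
        refine ⟨?_, ?_⟩
        · rw [Dg_one a η ha]
          simp only [Nat.cast_one]
          rw [hB1, hA1]; ring
        · simp only [Nat.cast_one]
          rw [hB1]
          have e : shift a 0 = a := rfl
          have e' : shift η 0 = η := rfl
          simp [Cg, Finset.sum_range_succ, Dg_zero, e, e', Dg_one a η ha, rho]
          ring
      | n + 2, ih =>
        obtain ⟨h1, h2⟩ := ih n (by omega)
        obtain ⟨h3, h4⟩ := ih (n + 1) (by omega)
        refine ⟨?_, ?_⟩
        · rw [Dg_rec a η ha, ← h1, ← h3, hBr, hAr]; ring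
        · rw [Cg_rec a η ha, ← h2, ← h4, hBr]
  intro n
  rw [Cg_eq]
  exact main n
end
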